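/- arXiv:1704.03122 — 2 statements merged into one kernel-verified Lean document; each statement's English description precedes it below -/
import Mathlib

section
/- Let n ≥ 5 and let G be a connected simple graph on n vertices such that the multiplicity of the largest distance Laplacian eigenvalue of G equals n−3. If H is any connected simple graph on n vertices whose distance Laplacian matrix has the same multiset of eigenvalues as that of G, then H is isomorphic to G. -/
open Matrix

/-- The distance Laplacian matrix of a graph: diagonal entries are the transmissions
`Tr(v) = ∑ u, d(v,u)`, off-diagonal entries are `-d(u,v)`. -/
noncomputable def distLaplacian {V : Type*} [Fintype V] [DecidableEq V]
    (G : SimpleGraph V) : Matrix V V ℝ :=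
  Matrix.of fun i j => if i = j then ∑ k : V, (G.dist i k : ℝ) else -(G.dist i j : ℝ)

/-- The multiplicity of `μ` as an eigenvalue of `M`, i.e. the dimension of the
corresponding eigenspace. -/
noncomputable def eigMult {V : Type*} [Fintype V] (M : Matrix V V ℝ) (μ : ℝ) : ℕ :=
  Module.finrank ℝ (Module.End.eigenspace M.mulVecLin μ)

/-- The largest eigenvalue of a matrix. -/
noncomputable def lambdaMax {V : Type*} [Fintype V] (M : Matrix V V ℝ) : ℝ :=
  sSup {μ : ℝ | Module.End.HasEigenvalue M.mulVecLin μ}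

/-- The transmission of a vertex. -/
noncomputable def transmission {V : Type*} [Fintype V] (G : SimpleGraph V) (v : V) : ℕ :=
  ∑ u : V, G.dist v u

/-!
If `G` is not complete, `lam • 1 - D^L(G)` has rank at most `3` and constant nonzero column sums, so
any four of its columns satisfy a nontrivial relation whose coefficients sum to zero. Along a
geodesic of length `3` such relations are impossible, so `G` has diameter at most `2`, and `D^L(G)`
then differs from the Laplacian matrix of the complement `Γ` only by a combination of the identity
and the all-ones matrix, which the relations survive. If `Γ` is connected, it contains an induced
path on four vertices, because its complement is connected too, and the relations force `Γ` to be
the `5`-cycle. Otherwise they make `G` a complete tripartite graph or a blow-up of the paw. The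
largest eigenvalue, the number of vertices and the number of edges, which is read off the trace,
tell all these graphs apart.
-/

variable {V W K : Type*}

lemma exists_adj_mem_notMem {Γ : SimpleGraph V} {u v : V} (huv : Γ.Reachable u v) {S : Set V}
    (hu : u ∈ S) (hv : v ∉ S) : ∃ x ∈ S, ∃ y ∉ S, Γ.Adj x y := by
  obtain ⟨p⟩ := huv
  obtain ⟨e, -, hfst, hsnd⟩ := p.exists_boundary_dart S hu hv
  exact ⟨e.fst, hfst, e.snd, hsnd, e.adj⟩

lemma exists_forall_ne_of_five_le_card [Fintype V] (hcard : 5 ≤ Fintype.card V)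
    (a b e d : V) : ∃ v, v ≠ a ∧ v ≠ b ∧ v ≠ e ∧ v ≠ d := by
  classical
  have hlt : ({a, b, e, d} : Finset V).card < Finset.univ.card :=
    Finset.card_le_four.trans_lt hcard
  obtain ⟨v, -, hv⟩ := Finset.exists_mem_notMem_of_card_lt_card hlt
  exact ⟨v, by simpa using hv⟩

section Spectrum

variable [Fintype V] [DecidableEq V] [Fintype W] [DecidableEq W]
  {A : Matrix V V ℝ} {B : Matrix W W ℝ}

lemma eigenspace_mulVecLin_eq_ker (A : Matrix V V ℝ) (μ : ℝ) :
    Module.End.eigenspace A.mulVecLin μ = LinearMap.ker (A - scalar V μ).mulVecLin := by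
  ext x
  rw [Module.End.mem_eigenspace_iff, LinearMap.mem_ker, mulVecLin_apply, mulVecLin_apply,
    sub_mulVec, sub_eq_zero, scalar_apply, ← smul_one_eq_diagonal, smul_mulVec, one_mulVec]

lemma eigMult_add_rank (A : Matrix V V ℝ) (μ : ℝ) :
    eigMult A μ + (A - scalar V μ).rank = Fintype.card V := by
  rw [eigMult, eigenspace_mulVecLin_eq_ker, Matrix.rank, add_comm,
    LinearMap.finrank_range_add_finrank_ker, Module.finrank_fintype_fun_eq_card]

lemma eigMult_eq_count_roots_charpoly (hA : A.IsHermitian) (μ : ℝ) :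
    eigMult A μ = A.charpoly.roots.count μ := by
  have hAμ : (A - scalar V μ).IsHermitian := hA.sub (isHermitian_diagonal _)
  have hcount : A.charpoly.roots.count μ =
      Fintype.card {i // hAμ.eigenvalues i = 0} := by
    rw [Polynomial.count_roots, Polynomial.rootMultiplicity_eq_rootMultiplicity,
      ← charpoly_sub_scalar, ← Polynomial.count_roots, hAμ.roots_charpoly_eq_eigenvalues,
      Multiset.count_map, Fintype.card_subtype]
    simp only [eq_comm (a := (0 : ℝ))]
    rfl
  have hrank := eigMult_add_rank A μ
  rw [hAμ.rank_eq_card_non_zero_eigs] at hrank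
  have hcompl := Fintype.card_subtype_compl fun i => hAμ.eigenvalues i = 0
  have hle := Fintype.card_subtype_le fun i => hAμ.eigenvalues i = 0
  change eigMult A μ + Fintype.card {i // ¬ hAμ.eigenvalues i = 0} = _ at hrank
  omega

lemma card_roots_charpoly (hA : A.IsHermitian) :
    Multiset.card A.charpoly.roots = Fintype.card V := by
  rw [hA.roots_charpoly_eq_eigenvalues]
  simp

lemma lambdaMax_congr (h : A.charpoly.roots = B.charpoly.roots) : lambdaMax A = lambdaMax B := by
  simp only [lambdaMax, Module.End.hasEigenvalue_iff_isRoot_charpoly, charpoly_mulVecLin,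
    ← Polynomial.mem_roots (charpoly_monic _).ne_zero, h]

lemma trace_congr (hA : A.IsHermitian) (hB : B.IsHermitian)
    (h : A.charpoly.roots = B.charpoly.roots) : A.trace = B.trace := by
  rw [trace_eq_sum_roots_charpoly_of_splits hA.splits_charpoly,
    trace_eq_sum_roots_charpoly_of_splits hB.splits_charpoly, h]

lemma posSemidef_lambdaMax_sub (hA : A.IsHermitian) : (lambdaMax A • 1 - A).PosSemidef := by
  have hB : (lambdaMax A • 1 - A).IsHermitian := by
    rw [smul_one_eq_diagonal]
    exact (isHermitian_diagonal _).sub hA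
  rw [hB.posSemidef_iff_eigenvalues_nonneg]
  intro i
  have hx := hB.mulVec_eigenvectorBasis i
  rw [sub_mulVec, smul_mulVec, one_mulVec, sub_eq_iff_eq_add', ← sub_eq_iff_eq_add,
    ← sub_smul] at hx
  have hx0 : (hB.eigenvectorBasis i : V → ℝ) ≠ 0 := fun h =>
    hB.eigenvectorBasis.orthonormal.ne_zero i (PiLp.ext fun v => congrFun h v)
  have hle : lambdaMax A - hB.eigenvalues i ≤ lambdaMax A :=
    le_csSup (Module.End.finite_hasEigenvalue A.mulVecLin).bddAbove
      (Module.End.hasEigenvalue_of_hasEigenvector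
        ⟨Module.End.mem_eigenspace_iff.2 hx.symm, hx0⟩)
  simpa using hle

omit [DecidableEq V] in
lemma dotProduct_mulVec_le_lambdaMax (hA : A.IsHermitian) (x : V → ℝ) :
    x ⬝ᵥ A *ᵥ x ≤ lambdaMax A * (x ⬝ᵥ x) := by
  classical
  have h := (posSemidef_lambdaMax_sub hA).dotProduct_mulVec_nonneg x
  rwa [sub_mulVec, smul_mulVec, one_mulVec, dotProduct_sub, dotProduct_smul, star_trivial,
    smul_eq_mul, sub_nonneg] at h

/-- Any four columns of `M` satisfy a nontrivial linear relation whose coefficients sum to `0`.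
Repeated columns are allowed, since they satisfy such a relation trivially. -/
def FourColumnsDependent (M : Matrix V V ℝ) : Prop :=
  ∀ a b c d, ∃ α β γ δ : ℝ, ¬(α = 0 ∧ β = 0 ∧ γ = 0 ∧ δ = 0) ∧ α + β + γ + δ = 0 ∧
    ∀ v, α * M v a + β * M v b + γ * M v c + δ * M v d = 0

omit [DecidableEq V] in
lemma not_linearIndependent_col_of_rank_le_three {M : Matrix V V ℝ} (hM : M.rank ≤ 3)
    (i : Fin 4 → V) : ¬ LinearIndependent ℝ (M.col ∘ i) := fun hli => by
  have hspan : Submodule.span ℝ (Set.range (M.col ∘ i)) ≤ Submodule.span ℝ (Set.range M.col) :=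
    Submodule.span_mono (Set.range_comp_subset_range i M.col)
  have hle := Submodule.finrank_mono hspan
  rw [finrank_span_eq_card hli, ← rank_eq_finrank_span_cols, Fintype.card_fin] at hle
  omega

lemma fourColumnsDependent_smul_one_sub {μ : ℝ} (hμ : μ ≠ 0) (hsum : ∀ a, ∑ v, A v a = 0)
    (hmult : Fintype.card V ≤ eigMult A μ + 3) : FourColumnsDependent (μ • 1 - A) := by
  intro a b c d
  have hrank : (μ • 1 - A).rank ≤ 3 := by
    have := eigMult_add_rank A μ
    rw [← neg_sub, ← neg_one_smul ℝ, rank_smul_of_mem_nonZeroDivisors _ (by simp),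
      smul_one_eq_diagonal, ← scalar_apply]
    omega
  obtain ⟨g, hg, i, hi⟩ := Fintype.not_linearIndependent_iff.1
    (not_linearIndependent_col_of_rank_le_three hrank ![a, b, c, d])
  have hrel : ∀ v, g 0 * (μ • 1 - A) v a + g 1 * (μ • 1 - A) v b + g 2 * (μ • 1 - A) v c +
      g 3 * (μ • 1 - A) v d = 0 := fun v => by
    have hv := congrFun hg v
    rw [Fin.sum_univ_four] at hv
    exact hv
  have hcol : ∀ u, ∑ v, (μ • 1 - A) v u = μ := fun u => by
    simp [Matrix.one_apply, hsum]
  refine ⟨g 0, g 1, g 2, g 3, fun h => hi ?_, ?_, hrel⟩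
  · fin_cases i
    exacts [h.1, h.2.1, h.2.2.1, h.2.2.2]
  · have htotal := Finset.sum_eq_zero fun v (_ : v ∈ Finset.univ) => hrel v
    simp only [Finset.sum_add_distrib, ← Finset.mul_sum, hcol, ← add_mul] at htotal
    exact (mul_eq_zero.1 htotal).resolve_right hμ

end Spectrum

section DistLaplacian

variable [Fintype V] [DecidableEq V] {G : SimpleGraph V}

lemma distLaplacian_apply_self (G : SimpleGraph V) (v : V) :
    distLaplacian G v v = transmission G v := by
  simp [distLaplacian, transmission]

lemma distLaplacian_apply_of_ne (G : SimpleGraph V) {u v : V} (h : u ≠ v) :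
    distLaplacian G u v = -G.dist u v := by
  simp [distLaplacian, h]

lemma isHermitian_distLaplacian (G : SimpleGraph V) : (distLaplacian G).IsHermitian := by
  ext u v
  by_cases h : u = v
  · simp [h]
  · simp [distLaplacian_apply_of_ne, h, Ne.symm h, G.dist_comm]

lemma distLaplacian_eq_diagonal_sub (G : SimpleGraph V) :
    distLaplacian G =
      diagonal (fun v => (transmission G v : ℝ)) - Matrix.of fun u v => (G.dist u v : ℝ) := by
  ext u v
  by_cases h : u = v
  · simp [h, distLaplacian_apply_self]
  · simp [distLaplacian_apply_of_ne, h]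

lemma distLaplacian_mulVec (G : SimpleGraph V) (x : V → ℝ) (v : V) :
    (distLaplacian G *ᵥ x) v = transmission G v * x v - ∑ u, (G.dist v u : ℝ) * x u := by
  rw [distLaplacian_eq_diagonal_sub, sub_mulVec, Pi.sub_apply, mulVec_diagonal]
  rfl

lemma distLaplacian_mulVec_one (G : SimpleGraph V) : distLaplacian G *ᵥ 1 = 0 := by
  ext v
  simp [distLaplacian_mulVec, transmission]

lemma sum_distLaplacian_col (G : SimpleGraph V) (v : V) : ∑ u, distLaplacian G u v = 0 := by
  calc ∑ u, distLaplacian G u v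
    _ = (distLaplacian G *ᵥ 1) v := Finset.sum_congr rfl fun u _ => by
      rw [← (isHermitian_distLaplacian G).apply u v, star_trivial, Pi.one_apply, mul_one]
    _ = 0 := by rw [distLaplacian_mulVec_one, Pi.zero_apply]

lemma trace_distLaplacian (G : SimpleGraph V) :
    (distLaplacian G).trace = ∑ v, (transmission G v : ℝ) := by
  simp [Matrix.trace, distLaplacian_apply_self]

omit [DecidableEq V] in
lemma card_le_transmission (hG : G.Connected) {u v : V} (hne : u ≠ v) (huv : ¬ G.Adj u v) :
    Fintype.card V ≤ transmission G u := by
  classical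
  have hdist : ∀ w, 1 + (if w = v then 1 else 0) ≤ G.dist u w + if w = u then 1 else 0 := by
    intro w
    rcases eq_or_ne w u with rfl | hwu
    · simp [hne]
    · have hpos := hG.pos_dist_of_ne hwu.symm
      split_ifs with hwv
      · have h1 : G.dist u v ≠ 1 := fun h => huv (SimpleGraph.dist_eq_one_iff_adj.1 h)
        subst hwv
        omega
      · omega
  have hsum := Finset.sum_le_sum fun w (_ : w ∈ Finset.univ) => hdist w
  simpa [Finset.sum_add_distrib, transmission] using hsum

lemma card_add_two_le_lambdaMax (hG : G.Connected) (hne : G ≠ ⊤) :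
    (Fintype.card V : ℝ) + 2 ≤ lambdaMax (distLaplacian G) := by
  obtain ⟨u, v, huv, hadj⟩ := SimpleGraph.ne_top_iff_exists_not_adj.1 hne
  have hray := dotProduct_mulVec_le_lambdaMax (isHermitian_distLaplacian G)
    (Pi.single u 1 - Pi.single v 1)
  simp only [mulVec_sub, mulVec_single_one, sub_dotProduct, single_one_dotProduct, Pi.sub_apply,
    col_apply, Pi.single_eq_same, Pi.single_eq_of_ne huv, Pi.single_eq_of_ne huv.symm,
    distLaplacian_apply_self, distLaplacian_apply_of_ne G huv,
    distLaplacian_apply_of_ne G huv.symm, G.dist_comm (u := v)] at hray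
  have hu : (Fintype.card V : ℝ) ≤ transmission G u := mod_cast card_le_transmission hG huv hadj
  have hv : (Fintype.card V : ℝ) ≤ transmission G v :=
    mod_cast card_le_transmission hG huv.symm fun h => hadj h.symm
  have hdist : (2 : ℝ) ≤ G.dist u v := by
    have h0 := hG.pos_dist_of_ne huv
    have h1 : G.dist u v ≠ 1 := fun h => hadj (SimpleGraph.dist_eq_one_iff_adj.1 h)
    exact_mod_cast (by omega : 2 ≤ G.dist u v)
  linarith

lemma card_mul_transmission_le (G : SimpleGraph V) (v : V) :
    (Fintype.card V : ℝ) * transmission G v ≤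
      lambdaMax (distLaplacian G) * (Fintype.card V - 1) := by
  set n : ℝ := (Fintype.card V : ℝ) with hn
  have hray := dotProduct_mulVec_le_lambdaMax (isHermitian_distLaplacian G)
    (n • Pi.single v 1 - 1)
  simp only [mulVec_sub, mulVec_smul, distLaplacian_mulVec_one, sub_zero, mulVec_single_one,
    sub_dotProduct, smul_dotProduct, single_one_dotProduct, dotProduct_smul, dotProduct_sub,
    col_apply, Pi.smul_apply, Pi.sub_apply, Pi.one_apply, distLaplacian_apply_self, one_dotProduct,
    sum_distLaplacian_col, Pi.single_eq_same, smul_eq_mul, dotProduct_single_one,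
    Finset.sum_const, Finset.card_univ, nsmul_eq_mul, mul_one, ← hn,
    sub_self, sub_zero, mul_left_comm _ n] at hray
  exact le_of_mul_le_mul_left hray (by rw [hn]; exact_mod_cast Fintype.card_pos_iff.2 ⟨v⟩)

lemma transmission_add_one_lt_lambdaMax (hG : G.Connected) (hne : G ≠ ⊤) (v : V) :
    (transmission G v : ℝ) + 1 < lambdaMax (distLaplacian G) := by
  have hn : (0 : ℝ) < Fintype.card V := mod_cast Fintype.card_pos_iff.2 ⟨v⟩
  have hlam := card_add_two_le_lambdaMax hG hne
  have htr := card_mul_transmission_le G v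
  nlinarith [hn]

end DistLaplacian

section Diameter

variable [Fintype V] [DecidableEq V] {G : SimpleGraph V} {lam : ℝ} {a b e d k : V}

/-- The consequences, for the pencil `lam • 1 - D^L(G)`, of `lam` being the largest distance
Laplacian eigenvalue of a connected non-complete graph `G` on `n` vertices, with multiplicity at
least `n - 3`. -/
structure IsDistExtremal (G : SimpleGraph V) (lam : ℝ) : Prop where
  connected : G.Connected
  transmission_add_one_lt : ∀ v, (transmission G v : ℝ) + 1 < lam
  dependent : FourColumnsDependent (lam • 1 - distLaplacian G)

lemma isDistExtremal_lambdaMax (hG : G.Connected) (hne : G ≠ ⊤)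
    (hmult : Fintype.card V ≤ eigMult (distLaplacian G) (lambdaMax (distLaplacian G)) + 3) :
    IsDistExtremal G (lambdaMax (distLaplacian G)) where
  connected := hG
  transmission_add_one_lt := transmission_add_one_lt_lambdaMax hG hne
  dependent := by
    have hpos : 0 < lambdaMax (distLaplacian G) :=
      lt_of_lt_of_le (by positivity) (card_add_two_le_lambdaMax hG hne)
    exact fourColumnsDependent_smul_one_sub hpos.ne' (sum_distLaplacian_col G) hmult

omit [Fintype V] [DecidableEq V] in
lemma dist_sub_dist_of_adj {u v : V} (h : G.Adj u v) (k : V) :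
    (G.dist k u : ℝ) - G.dist k v = -1 ∨ (G.dist k u : ℝ) - G.dist k v = 0 ∨
      (G.dist k u : ℝ) - G.dist k v = 1 := by
  have hint : (G.dist k u : ℤ) - G.dist k v = -1 ∨ (G.dist k u : ℤ) - G.dist k v = 0 ∨
      (G.dist k u : ℤ) - G.dist k v = 1 := by
    have := h.diff_dist_adj (u := k)
    omega
  exact_mod_cast hint

/-- `a`, `b`, `e`, `d` are the successive vertices of a geodesic of length `3`. -/
structure IsGeodesicQuad (G : SimpleGraph V) (a b e d : V) : Prop where
  adj_ab : G.Adj a b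
  adj_be : G.Adj b e
  adj_ed : G.Adj e d
  dist_ad : G.dist a d = 3

namespace IsGeodesicQuad

omit [Fintype V] [DecidableEq V] in
lemma exists_of_three_le_dist (hG : G.Connected) {u v : V} (h : 3 ≤ G.dist u v) :
    ∃ a b e d, IsGeodesicQuad G a b e d := by
  obtain ⟨p, hp⟩ := hG.exists_walk_length_eq_dist u v
  have htake := SimpleGraph.length_eq_dist_of_subwalk hp (p.isSubwalk_take 3)
  rw [p.take_length, min_eq_left (by omega)] at htake
  exact ⟨u, p.getVert 1, p.getVert 2, p.getVert 3,
    by simpa using p.adj_getVert_succ (i := 0) (by omega), p.adj_getVert_succ (by omega),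
    p.adj_getVert_succ (by omega), htake.symm⟩

omit [Fintype V] [DecidableEq V] in
lemma dist_ae (hG : G.Connected) (h : IsGeodesicQuad G a b e d) : G.dist a e = 2 := by
  have h1 := hG.dist_triangle (u := a) (v := e) (w := d)
  have h2 := hG.dist_triangle (u := a) (v := b) (w := e)
  rw [SimpleGraph.dist_eq_one_iff_adj.2 h.adj_ed, h.dist_ad] at h1
  rw [SimpleGraph.dist_eq_one_iff_adj.2 h.adj_ab, SimpleGraph.dist_eq_one_iff_adj.2 h.adj_be] at h2
  omega

omit [Fintype V] [DecidableEq V] in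
lemma symm (h : IsGeodesicQuad G a b e d) : IsGeodesicQuad G d e b a :=
  ⟨h.adj_ed.symm, h.adj_be.symm, h.adj_ab.symm, by rw [G.dist_comm, h.dist_ad]⟩

omit [Fintype V] [DecidableEq V] in
lemma dist_table (hG : G.Connected) (h : IsGeodesicQuad G a b e d) :
    (G.dist a b = 1 ∧ G.dist a e = 2 ∧ G.dist a d = 3) ∧
    (G.dist b a = 1 ∧ G.dist b e = 1 ∧ G.dist b d = 2) ∧
    (G.dist e a = 2 ∧ G.dist e b = 1 ∧ G.dist e d = 1) ∧
    (G.dist d a = 3 ∧ G.dist d b = 2 ∧ G.dist d e = 1) := by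
  simp only [SimpleGraph.dist_eq_one_iff_adj, h.adj_ab, h.adj_be, h.adj_ed, h.dist_ad,
    h.dist_ae hG, h.symm.dist_ae hG, h.symm.dist_ad, h.adj_ab.symm, h.adj_be.symm, h.adj_ed.symm,
    G.dist_comm (u := b) (v := d), G.dist_comm (u := e) (v := a), and_self]

omit [Fintype V] [DecidableEq V] in
lemma ne_table (hG : G.Connected) (h : IsGeodesicQuad G a b e d) :
    (a ≠ b ∧ a ≠ e ∧ a ≠ d) ∧ (b ≠ a ∧ b ≠ e ∧ b ≠ d) ∧ (e ≠ a ∧ e ≠ b ∧ e ≠ d) ∧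
      (d ≠ a ∧ d ≠ b ∧ d ≠ e) := by
  obtain ⟨⟨hab, hae, had⟩, ⟨hba, hbe, hbd⟩, ⟨hea, heb, hed⟩, ⟨hda, hdb, hde⟩⟩ := h.dist_table hG
  refine ⟨⟨?_, ?_, ?_⟩, ⟨?_, ?_, ?_⟩, ⟨?_, ?_, ?_⟩, ⟨?_, ?_, ?_⟩⟩ <;> rintro rfl <;> simp_all

end IsGeodesicQuad

lemma smul_one_sub_distLaplacian_apply_self (G : SimpleGraph V) (lam : ℝ) (v : V) :
    (lam • 1 - distLaplacian G) v v = lam - transmission G v := by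
  simp [distLaplacian_apply_self]

lemma smul_one_sub_distLaplacian_apply_of_ne (G : SimpleGraph V) (lam : ℝ) {u v : V}
    (h : u ≠ v) : (lam • 1 - distLaplacian G) u v = G.dist u v := by
  simp [distLaplacian_apply_of_ne, h]

namespace IsDistExtremal

lemma exists_relation (hext : IsDistExtremal G lam) (h : IsGeodesicQuad G a b e d) :
    ∃ A B C D : ℝ, 0 < A ∧ 0 < B ∧ 0 < C ∧ 0 < D ∧ A + B = C + D ∧
      (lam - transmission G e - 1) * C = A ∧
      ∀ k, k ≠ a → k ≠ b → k ≠ e → k ≠ d →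
        A * G.dist k a + B * G.dist k b = C * G.dist k e + D * G.dist k d := by
  obtain ⟨α, β, γ, δ, hne, hsum, hrow⟩ := hext.dependent a b e d
  have ta := hext.transmission_add_one_lt a
  have tb := hext.transmission_add_one_lt b
  have te := hext.transmission_add_one_lt e
  have td := hext.transmission_add_one_lt d
  have ha := hrow a
  have hb := hrow b
  have he := hrow e
  have hd := hrow d
  simp only [smul_one_sub_distLaplacian_apply_self, smul_one_sub_distLaplacian_apply_of_ne, ne_eq,
    h.ne_table hext.connected, h.dist_table hext.connected, not_false_eq_true, Nat.cast_one,
    Nat.cast_ofNat] at ha hb he hd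
  have hβδ : (lam - transmission G b - 1) * β = -δ := by linear_combination hb - hsum
  have hγα : (lam - transmission G e - 1) * γ = -α := by linear_combination he - hsum
  have hαδ : (lam - transmission G a) * α = -((lam - transmission G d) * δ) := by
    linear_combination ha + hd - 3 * hsum
  have houtside : ∀ k, k ≠ a → k ≠ b → k ≠ e → k ≠ d →
      α * G.dist k a + β * G.dist k b + γ * G.dist k e + δ * G.dist k d = 0 := by
    intro k hka hkb hke hkd
    simpa only [smul_one_sub_distLaplacian_apply_of_ne, ne_eq, hka, hkb, hke, hkd,
      not_false_eq_true] using hrow k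
  rcases lt_trichotomy α 0 with hα | rfl | hα
  · have hδ : 0 < δ := by nlinarith
    refine ⟨-α, -β, γ, δ, by linarith, by nlinarith, by nlinarith, hδ, by linarith, hγα,
      fun k hka hkb hke hkd => ?_⟩
    linear_combination -houtside k hka hkb hke hkd
  · exact absurd ⟨rfl, by nlinarith, by nlinarith, by nlinarith⟩ hne
  · have hδ : δ < 0 := by nlinarith
    refine ⟨α, β, -γ, -δ, hα, by nlinarith, by nlinarith, by linarith, by linarith, by linarith,
      fun k hka hkb hke hkd => ?_⟩
    linear_combination houtside k hka hkb hke hkd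

lemma dist_symm_or_alternating (hext : IsDistExtremal G lam) (h : IsGeodesicQuad G a b e d)
    (hka : k ≠ a) (hkb : k ≠ b) (hke : k ≠ e) (hkd : k ≠ d) :
    (G.dist k a = G.dist k d ∧ G.dist k b = G.dist k e) ∨
      (G.dist k a = G.dist k e ∧ G.dist k b = G.dist k d ∧ (transmission G e : ℝ) + 2 = lam) := by
  obtain ⟨A, B, C, D, hA, hB, hC, hD, hsum, hCA, hrow⟩ := hext.exists_relation h
  have hk : A * ((G.dist k a : ℝ) - G.dist k b) + (A + B) * ((G.dist k b : ℝ) - G.dist k e) +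
      D * ((G.dist k e : ℝ) - G.dist k d) = 0 := by
    linear_combination hrow k hka hkb hke hkd - G.dist k e * hsum
  have hab := dist_sub_dist_of_adj h.adj_ab k
  have hbe := dist_sub_dist_of_adj h.adj_be k
  have hed := dist_sub_dist_of_adj h.adj_ed k
  have hsymm : (G.dist k b : ℝ) - G.dist k e = 0 →
      (G.dist k a : ℝ) - G.dist k b + (G.dist k e - G.dist k d) = 0 := by
    intro h0
    rw [h0] at hk
    rcases hab with h1 | h1 | h1 <;> rcases hed with h3 | h3 | h3 <;>
      rw [h1, h3] at hk ⊢ <;> linarith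
  have halt : (G.dist k b : ℝ) - G.dist k e ≠ 0 →
      (G.dist k a : ℝ) = G.dist k e ∧ (G.dist k b : ℝ) = G.dist k d ∧ A = C := by
    intro h0
    rcases hbe with h2 | h2 | h2
    · rcases hab with h1 | h1 | h1 <;> rcases hed with h3 | h3 | h3 <;>
        rw [h1, h2, h3] at hk <;> first | linarith | exact ⟨by linarith, by linarith, by linarith⟩
    · exact absurd h2 h0
    · rcases hab with h1 | h1 | h1 <;> rcases hed with h3 | h3 | h3 <;>
        rw [h1, h2, h3] at hk <;> first | linarith | exact ⟨by linarith, by linarith, by linarith⟩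
  by_cases h0 : (G.dist k b : ℝ) - G.dist k e = 0
  · exact Or.inl ⟨by exact_mod_cast (by linarith [hsymm h0] : (G.dist k a : ℝ) = G.dist k d),
      by exact_mod_cast sub_eq_zero.1 h0⟩
  · obtain ⟨hae, hbd, rfl⟩ := halt h0
    refine Or.inr ⟨mod_cast hae, mod_cast hbd, ?_⟩
    have hte : lam - transmission G e - 1 = 1 := mul_right_cancel₀ hC.ne' (by rw [hCA, one_mul])
    linarith

lemma not_dist_eq_one_and_dist_eq_one (hext : IsDistExtremal G lam)
    (h : IsGeodesicQuad G a b e d)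
    (hka : k ≠ a) (hkb : k ≠ b) (hke : k ≠ e) (hkd : k ≠ d)
    (hb : G.dist k b = 1) (he : G.dist k e = 1) (had : G.dist k a = G.dist k d) : False := by
  obtain ⟨α, β, γ, δ, hne, hsum, hrow⟩ := hext.dependent a e d k
  have te := hext.transmission_add_one_lt e
  have hrb := hrow b
  have hre := hrow e
  have hrd := hrow d
  simp only [smul_one_sub_distLaplacian_apply_self, smul_one_sub_distLaplacian_apply_of_ne, ne_eq,
    h.ne_table hext.connected, h.dist_table hext.connected, hkb.symm, hke.symm, hkd.symm,
    G.dist_comm (v := k), hb, he, ← had, not_false_eq_true, Nat.cast_one,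
    Nat.cast_ofNat] at hrb hre hrd
  have hγ : γ = 0 := by linear_combination hrb - hsum
  subst hγ
  have hβ : (lam - transmission G e - 1) * β = -α := by linear_combination hre - hsum
  have hκ : G.dist k a = 1 ∨ G.dist k a = 2 := by
    have h1 := hext.connected.pos_dist_of_ne hka
    have h2 := hext.connected.dist_triangle (u := k) (v := b) (w := a)
    rw [hb, (h.dist_table hext.connected).2.1.1] at h2
    omega
  have hα : α = 0 := by
    rcases hκ with hκ | hκ <;> rw [hκ] at hrd <;> push_cast at hrd
    · linarith
    · have hαβ : α = β := by linear_combination hrd - 2 * hsum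
      nlinarith [hαβ]
  subst hα
  have hβ0 : β = 0 := by nlinarith
  exact hne ⟨rfl, hβ0, rfl, by linarith⟩

lemma dist_ne_dist_of_transmission_add_two (hext : IsDistExtremal G lam)
    (h : IsGeodesicQuad G a b e d)
    (hkb : k ≠ b) (hke : k ≠ e) (hkd : k ≠ d)
    (ht : (transmission G e : ℝ) + 2 = lam) : G.dist k b ≠ G.dist k e := by
  intro hbe
  obtain ⟨α, β, γ, δ, hne, hsum, hrow⟩ := hext.dependent a e d k
  have hrb := hrow b
  have hre := hrow e
  have hrd := hrow d
  simp only [smul_one_sub_distLaplacian_apply_self, smul_one_sub_distLaplacian_apply_of_ne, ne_eq,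
    h.ne_table hext.connected, h.dist_table hext.connected, hkb.symm, hke.symm, hkd.symm,
    G.dist_comm (v := k), hbe, ← ht, not_false_eq_true, Nat.cast_one,
    Nat.cast_ofNat] at hrb hre hrd
  have hδ : (2 * (G.dist k e : ℝ) - 3) * δ = 0 := by linear_combination hrb + hre - 3 * hsum
  have hodd : 2 * (G.dist k e : ℝ) - 3 ≠ 0 := fun h0 => by
    have : 2 * G.dist k e = 3 := by exact_mod_cast sub_eq_zero.1 h0
    omega
  obtain rfl := (mul_eq_zero.1 hδ).resolve_left hodd
  obtain rfl : γ = 0 := by linear_combination hrb - hsum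
  exact hne ⟨by linarith, by linarith, rfl, rfl⟩

lemma transmission_add_two_of_adj (hext : IsDistExtremal G lam) (h : IsGeodesicQuad G a b e d)
    (hka : k ≠ a) (hkb : k ≠ b) (hke : k ≠ e) (hkd : k ≠ d)
    (hadj : G.Adj k a ∨ G.Adj k b ∨ G.Adj k e ∨ G.Adj k d) :
    (transmission G e : ℝ) + 2 = lam := by
  rcases hext.dist_symm_or_alternating h hka hkb hke hkd with ⟨had, hbe⟩ | ⟨-, -, ht⟩
  · have htri := hext.connected.dist_triangle (u := a) (v := k) (w := d)
    have hpos := hext.connected.pos_dist_of_ne hkb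
    rw [h.dist_ad, G.dist_comm] at htri
    simp only [← SimpleGraph.dist_eq_one_iff_adj] at hadj
    have hb : G.dist k b = 1 := by omega
    exact (hext.not_dist_eq_one_and_dist_eq_one h hka hkb hke hkd hb (hbe ▸ hb) had).elim
  · exact ht

omit [DecidableEq V] in
lemma transmission_eq_add_two (hG : G.Connected) (h : IsGeodesicQuad G a b e d)
    (hout : ∀ k, k ≠ a → k ≠ b → k ≠ e → k ≠ d → G.dist k a = G.dist k e) :
    transmission G a = transmission G e + 2 := by
  classical
  have hk : ∀ k, G.dist a k + (if k = a then 2 else 0) =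
      G.dist e k + ((if k = e then 2 else 0) + if k = d then 2 else 0) := by
    intro k
    rcases eq_or_ne k a with rfl | hka
    · simp [h.ne_table hG, h.dist_table hG]
    rcases eq_or_ne k b with rfl | hkb
    · simp [h.ne_table hG, h.dist_table hG]
    rcases eq_or_ne k e with rfl | hke
    · simp [h.ne_table hG, h.dist_table hG]
    rcases eq_or_ne k d with rfl | hkd
    · simp [h.ne_table hG, h.dist_table hG]
    simp [hka, hke, hkd, G.dist_comm (v := k), hout k hka hkb hke hkd]
  have hsum := Finset.sum_congr rfl fun k (_ : k ∈ Finset.univ) => hk k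
  simp only [Finset.sum_add_distrib, Finset.sum_ite_eq', Finset.mem_univ, if_true] at hsum
  simp only [transmission]
  omega

lemma dist_le_two (hext : IsDistExtremal G lam) (hcard : 5 ≤ Fintype.card V) (u v : V) :
    G.dist u v ≤ 2 := by
  by_contra! huv
  obtain ⟨a, b, e, d, h⟩ := IsGeodesicQuad.exists_of_three_le_dist hext.connected huv
  obtain ⟨l, hl⟩ := exists_forall_ne_of_five_le_card hcard a b e d
  obtain ⟨x, hx, k, hk, hadj⟩ := exists_adj_mem_notMem (hext.connected.preconnected a l)
    (S := {a, b, e, d}) (by simp) (by simpa using hl)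
  have ht : (transmission G e : ℝ) + 2 = lam := by
    simp only [Set.mem_insert_iff, Set.mem_singleton_iff, not_or] at hx hk
    refine hext.transmission_add_two_of_adj h hk.1 hk.2.1 hk.2.2.1 hk.2.2.2 ?_
    rcases hx with rfl | rfl | rfl | rfl <;> simp only [G.adj_comm k, hadj, true_or, or_true]
  have htr := transmission_eq_add_two hext.connected h fun k hka hkb hke hkd => by
    rcases hext.dist_symm_or_alternating h hka hkb hke hkd with ⟨-, hbe⟩ | ⟨hae, -, -⟩
    · exact absurd hbe (hext.dist_ne_dist_of_transmission_add_two h hkb hke hkd ht)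
    · exact hae
  have hta := hext.transmission_add_one_lt a
  rw [htr] at hta
  push_cast at hta
  linarith

end IsDistExtremal

end Diameter

section Complement

variable [Fintype V] [DecidableEq V] {G Γ : SimpleGraph V} [DecidableRel G.Adj]
  [DecidableRel Γ.Adj] {lam μ : ℝ} {u v : V}

/-- What remains of `IsDistExtremal G lam` for the complement `Γ` of `G`, with
`μ = lam - card V`, once `G` is known to have diameter at most `2`: then `D^L(G)` differs from the
ordinary Laplacian matrix of `Γ` only by a combination of the identity and the all-ones matrix. -/
structure IsLapExtremal (Γ : SimpleGraph V) [DecidableRel Γ.Adj] (μ : ℝ) : Prop where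
  degree_lt : ∀ v, (Γ.degree v : ℝ) < μ
  dependent : FourColumnsDependent (μ • 1 - Γ.lapMatrix ℝ)

lemma smul_one_sub_lapMatrix_apply_self (Γ : SimpleGraph V) [DecidableRel Γ.Adj] (μ : ℝ) (v : V) :
    (μ • 1 - Γ.lapMatrix ℝ) v v = μ - Γ.degree v := by
  simp [SimpleGraph.lapMatrix, SimpleGraph.degMatrix]

lemma smul_one_sub_lapMatrix_apply_of_ne (Γ : SimpleGraph V) [DecidableRel Γ.Adj] (μ : ℝ)
    (h : u ≠ v) : (μ • 1 - Γ.lapMatrix ℝ) u v = if Γ.Adj u v then 1 else 0 := by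
  simp [SimpleGraph.lapMatrix, SimpleGraph.degMatrix, h, SimpleGraph.adjMatrix_apply]

omit [Fintype V] in
lemma dist_eq_one_add_of_dist_le_two (hG : G.Connected) (hdiam : G.dist u v ≤ 2) (h : u ≠ v) :
    G.dist u v = 1 + if Gᶜ.Adj u v then 1 else 0 := by
  have hpos := hG.pos_dist_of_ne h
  have hone := SimpleGraph.dist_eq_one_iff_adj (G := G) (u := u) (v := v)
  have hcompl : Gᶜ.Adj u v ↔ ¬ G.Adj u v := by simp [h]
  split_ifs with hadj
  · have : G.dist u v ≠ 1 := mt hone.1 (hcompl.1 hadj)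
    omega
  · exact hone.2 (by tauto)

lemma transmission_add_one (hG : G.Connected) (hdiam : ∀ u v, G.dist u v ≤ 2) (v : V) :
    transmission G v + 1 = Fintype.card V + Gᶜ.degree v := by
  have hdist : ∀ u, G.dist v u + (if u = v then 1 else 0) = 1 + if Gᶜ.Adj v u then 1 else 0 := by
    intro u
    rcases eq_or_ne u v with rfl | h
    · simp
    · rw [dist_eq_one_add_of_dist_le_two hG (hdiam v u) h.symm, if_neg h, add_zero]
  have hsum := Finset.sum_congr rfl fun u (_ : u ∈ Finset.univ) => hdist u
  simpa [Finset.sum_add_distrib, ← SimpleGraph.card_neighborFinset_eq_degree,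
    SimpleGraph.neighborFinset_eq_filter, transmission] using hsum

lemma IsDistExtremal.isLapExtremal_compl (hext : IsDistExtremal G lam)
    (hcard : 5 ≤ Fintype.card V) : IsLapExtremal Gᶜ (lam - Fintype.card V) := by
  have hdiam := hext.dist_le_two hcard
  have htr : ∀ v, (transmission G v : ℝ) + 1 = Fintype.card V + Gᶜ.degree v := fun v => by
    exact_mod_cast transmission_add_one hext.connected hdiam v
  have hentry : ∀ u v, (lam • 1 - distLaplacian G) u v =
      ((lam - Fintype.card V) • 1 - Gᶜ.lapMatrix ℝ) u v + 1 := by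
    intro u v
    rcases eq_or_ne u v with rfl | h
    · rw [smul_one_sub_distLaplacian_apply_self, smul_one_sub_lapMatrix_apply_self]
      linear_combination -htr u
    · rw [smul_one_sub_distLaplacian_apply_of_ne G lam h,
        smul_one_sub_lapMatrix_apply_of_ne Gᶜ _ h,
        dist_eq_one_add_of_dist_le_two hext.connected (hdiam u v) h]
      push_cast
      ring
  refine ⟨fun v => by linarith [hext.transmission_add_one_lt v, htr v], fun a b c d => ?_⟩
  obtain ⟨α, β, γ, δ, hne, hsum, hrow⟩ := hext.dependent a b c d
  refine ⟨α, β, γ, δ, hne, hsum, fun v => ?_⟩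
  have hv := hrow v
  simp only [hentry] at hv
  linear_combination hv - hsum

end Complement

section InducedPath

variable {Γ : SimpleGraph V} {a b e d v : V}

/-- `a`, `b`, `e`, `d` are the successive vertices of an induced path on four vertices. -/
structure IsInducedPathFour (Γ : SimpleGraph V) (a b e d : V) : Prop where
  adj_ab : Γ.Adj a b
  adj_be : Γ.Adj b e
  adj_ed : Γ.Adj e d
  not_adj_ae : ¬ Γ.Adj a e
  not_adj_ad : ¬ Γ.Adj a d
  not_adj_bd : ¬ Γ.Adj b d

namespace IsInducedPathFour

lemma symm (h : IsInducedPathFour Γ a b e d) : IsInducedPathFour Γ d e b a :=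
  ⟨h.adj_ed.symm, h.adj_be.symm, h.adj_ab.symm, mt .symm h.not_adj_bd, mt .symm h.not_adj_ad,
    mt .symm h.not_adj_ae⟩

lemma adj_table (h : IsInducedPathFour Γ a b e d) :
    (Γ.Adj a b ∧ ¬ Γ.Adj a e ∧ ¬ Γ.Adj a d) ∧ (Γ.Adj b a ∧ Γ.Adj b e ∧ ¬ Γ.Adj b d) ∧
      (¬ Γ.Adj e a ∧ Γ.Adj e b ∧ Γ.Adj e d) ∧ (¬ Γ.Adj d a ∧ ¬ Γ.Adj d b ∧ Γ.Adj d e) :=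
  ⟨⟨h.adj_ab, h.not_adj_ae, h.not_adj_ad⟩, ⟨h.adj_ab.symm, h.adj_be, h.not_adj_bd⟩,
    ⟨h.symm.not_adj_bd, h.adj_be.symm, h.adj_ed⟩, h.symm.not_adj_ad, h.symm.not_adj_ae,
    h.adj_ed.symm⟩

lemma ne_table (h : IsInducedPathFour Γ a b e d) :
    (a ≠ b ∧ a ≠ e ∧ a ≠ d) ∧ (b ≠ a ∧ b ≠ e ∧ b ≠ d) ∧ (e ≠ a ∧ e ≠ b ∧ e ≠ d) ∧
      (d ≠ a ∧ d ≠ b ∧ d ≠ e) := by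
  have hae : a ≠ e := fun hae => h.not_adj_ad (hae ▸ h.adj_ed)
  have had : a ≠ d := fun had => h.not_adj_ae (had ▸ h.adj_ed.symm)
  have hbd : b ≠ d := fun hbd => h.not_adj_ad (hbd ▸ h.adj_ab)
  exact ⟨⟨h.adj_ab.ne, hae, had⟩, ⟨h.adj_ab.ne', h.adj_be.ne, hbd⟩,
    ⟨hae.symm, h.adj_be.ne', h.adj_ed.ne⟩, had.symm, hbd.symm, h.adj_ed.ne'⟩

end IsInducedPathFour

variable [Fintype V] [DecidableEq V] [DecidableRel Γ.Adj] {μ : ℝ}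

namespace IsLapExtremal

lemma exists_affine_combination (hext : IsLapExtremal Γ μ) (h : IsInducedPathFour Γ a b e d)
    (hva : v ≠ a) (hvb : v ≠ b) (hve : v ≠ e) (hvd : v ≠ d) :
    ∃ x y z : ℝ, x + y + z = 1 ∧
      (μ - Γ.degree a) * x = (if Γ.Adj v a then 1 else 0) ∧
      x + y = (if Γ.Adj v b then 1 else 0) ∧
      (μ - Γ.degree e) * y + z = (if Γ.Adj v e then 1 else 0) ∧
      y + (μ - Γ.degree d) * z = (if Γ.Adj v d then 1 else 0) := by
  obtain ⟨α, β, γ, δ, hne, hsum, hrow⟩ := hext.dependent a e d v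
  have ra := hext.degree_lt a
  have hra := hrow a
  have hrb := hrow b
  have hre := hrow e
  have hrd := hrow d
  simp only [smul_one_sub_lapMatrix_apply_self, smul_one_sub_lapMatrix_apply_of_ne, ne_eq,
    h.ne_table, h.adj_table, hva.symm, hvb.symm, hve.symm, hvd.symm, not_false_eq_true, if_true,
    if_false, Γ.adj_comm (v := v)] at hra hrb hre hrd
  have hδ : δ ≠ 0 := by
    rintro rfl
    have hα : α = 0 := by nlinarith
    subst hα
    exact hne ⟨rfl, by linarith, by linarith, rfl⟩
  refine ⟨-α / δ, -β / δ, -γ / δ, ?_, ?_, ?_, ?_, ?_⟩ <;> field_simp <;> linarith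

lemma not_adj_right_of_adj_left (hext : IsLapExtremal Γ μ) (h : IsInducedPathFour Γ a b e d)
    (hva : v ≠ a) (hvb : v ≠ b) (hve : v ≠ e) (hvd : v ≠ d) (ha : Γ.Adj v a)
    (hb : Γ.Adj v b) : ¬ Γ.Adj v e ∧ ¬ Γ.Adj v d := by
  obtain ⟨x, y, z, hsum, hra, hrb, hre, hrd⟩ := hext.exists_affine_combination h hva hvb hve hvd
  have rd := hext.degree_lt d
  rw [if_pos ha] at hra
  rw [if_pos hb] at hrb
  obtain rfl : z = 0 := by linarith
  by_cases hd : Γ.Adj v d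
  · rw [if_pos hd] at hrd
    obtain rfl : x = 0 := by linarith
    linarith
  rw [if_neg hd, mul_zero, add_zero] at hrd
  subst hrd
  refine ⟨fun he => ?_, hd⟩
  rw [if_pos he] at hre
  linarith

lemma mul_sub_degree_of_adj_end (hext : IsLapExtremal Γ μ) (h : IsInducedPathFour Γ a b e d)
    (hva : v ≠ a) (hvb : v ≠ b) (hve : v ≠ e) (hvd : v ≠ d) (ha : Γ.Adj v a)
    (hb : ¬ Γ.Adj v b) :
    ¬ Γ.Adj v e ∧
      (μ - Γ.degree a) * (μ - Γ.degree d) = 1 + if Γ.Adj v d then μ - Γ.degree a else 0 := by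
  obtain ⟨x, y, z, hsum, hra, hrb, hre, hrd⟩ := hext.exists_affine_combination h hva hvb hve hvd
  have re := sub_pos.2 (hext.degree_lt e)
  rw [if_pos ha] at hra
  rw [if_neg hb] at hrb
  obtain rfl : z = 1 := by linarith
  obtain rfl : y = -x := by linarith
  refine ⟨fun he => ?_, ?_⟩
  · rw [if_pos he] at hre
    have hx : x = 0 := (mul_eq_zero.1 (by linarith : (μ - Γ.degree e) * x = 0)).resolve_left re.ne'
    simp [hx] at hra
  · split_ifs at hrd ⊢ <;> linear_combination (μ - Γ.degree a) * hrd + hra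

lemma adj_right_of_adj_second (hext : IsLapExtremal Γ μ) (h : IsInducedPathFour Γ a b e d)
    (hva : v ≠ a) (hvb : v ≠ b) (hve : v ≠ e) (hvd : v ≠ d) (ha : ¬ Γ.Adj v a)
    (hb : Γ.Adj v b) : Γ.Adj v e ∧ Γ.Adj v d := by
  obtain ⟨x, y, z, hsum, hra, hrb, hre, hrd⟩ := hext.exists_affine_combination h hva hvb hve hvd
  have ra := sub_pos.2 (hext.degree_lt a)
  have re := hext.degree_lt e
  rw [if_neg ha] at hra
  rw [if_pos hb] at hrb
  obtain rfl : x = 0 := (mul_eq_zero.1 hra).resolve_left ra.ne'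
  obtain rfl : y = 1 := by linarith
  obtain rfl : z = 0 := by linarith
  refine ⟨by_contra fun he => ?_, by_contra fun hd => ?_⟩
  · rw [if_neg he] at hre
    linarith
  · rw [if_neg hd] at hrd
    linarith

lemma adj_right_of_not_adj_left (hext : IsLapExtremal Γ μ) (h : IsInducedPathFour Γ a b e d)
    (hva : v ≠ a) (hvb : v ≠ b) (hve : v ≠ e) (hvd : v ≠ d) (ha : ¬ Γ.Adj v a)
    (hb : ¬ Γ.Adj v b) : Γ.Adj v e ∧ Γ.Adj v d ∧ μ - Γ.degree d = 1 := by
  obtain ⟨x, y, z, hsum, hra, hrb, hre, hrd⟩ := hext.exists_affine_combination h hva hvb hve hvd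
  have ra := sub_pos.2 (hext.degree_lt a)
  have rd := hext.degree_lt d
  rw [if_neg ha] at hra
  rw [if_neg hb] at hrb
  obtain rfl : x = 0 := (mul_eq_zero.1 hra).resolve_left ra.ne'
  obtain rfl : y = 0 := by linarith
  obtain rfl : z = 1 := by linarith
  have he : Γ.Adj v e := by_contra fun he => by
    rw [if_neg he] at hre
    linarith
  have hd : Γ.Adj v d := by_contra fun hd => by
    rw [if_neg hd] at hrd
    linarith
  rw [if_pos hd] at hrd
  exact ⟨he, hd, by linarith⟩

lemma adj_pattern (hext : IsLapExtremal Γ μ) (h : IsInducedPathFour Γ a b e d)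
    (hva : v ≠ a) (hvb : v ≠ b) (hve : v ≠ e) (hvd : v ≠ d) :
    (¬ Γ.Adj v a ∧ ¬ Γ.Adj v b ∧ Γ.Adj v e ∧ Γ.Adj v d ∧ μ - Γ.degree d = 1) ∨
    (Γ.Adj v a ∧ Γ.Adj v b ∧ ¬ Γ.Adj v e ∧ ¬ Γ.Adj v d ∧ μ - Γ.degree a = 1) ∨
    (Γ.Adj v a ∧ ¬ Γ.Adj v b ∧ ¬ Γ.Adj v e ∧ Γ.Adj v d ∧
      μ - Γ.degree a = μ - Γ.degree d ∧
      (μ - Γ.degree a) ^ 2 = (μ - Γ.degree a) + 1) := by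
  by_cases ha : Γ.Adj v a <;> by_cases hb : Γ.Adj v b
  · obtain ⟨he, hd⟩ := hext.not_adj_right_of_adj_left h hva hvb hve hvd ha hb
    exact .inr (.inl ⟨ha, hb, he, hd,
      (hext.adj_right_of_not_adj_left h.symm hvd hve hvb hva hd he).2.2⟩)
  · obtain ⟨he, hmul⟩ := hext.mul_sub_degree_of_adj_end h hva hvb hve hvd ha hb
    have hd : Γ.Adj v d := by_contra fun hd =>
      hb (hext.adj_right_of_not_adj_left h.symm hvd hve hvb hva hd he).1
    have hmul' := (hext.mul_sub_degree_of_adj_end h.symm hvd hve hvb hva hd he).2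
    rw [if_pos hd] at hmul
    rw [if_pos ha] at hmul'
    have had : μ - Γ.degree a = μ - Γ.degree d := by linarith
    refine .inr (.inr ⟨ha, hb, he, hd, had, ?_⟩)
    rw [← had] at hmul
    linarith
  · obtain ⟨he, hd⟩ := hext.adj_right_of_adj_second h hva hvb hve hvd ha hb
    exact absurd hb (hext.not_adj_right_of_adj_left h.symm hvd hve hvb hva hd he).1
  · exact .inl ⟨ha, hb, hext.adj_right_of_not_adj_left h hva hvb hve hvd ha hb⟩

end IsLapExtremal

end InducedPath

section InducedCycleFive

variable {Γ : SimpleGraph V} {a b e d v : V}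

/-- `a`, `b`, `e`, `d`, `v` are the successive vertices of an induced cycle of length five. -/
structure IsInducedCycleFive (Γ : SimpleGraph V) (a b e d v : V) : Prop
    extends IsInducedPathFour Γ a b e d where
  adj_dv : Γ.Adj d v
  adj_va : Γ.Adj v a
  not_adj_bv : ¬ Γ.Adj b v
  not_adj_ev : ¬ Γ.Adj e v

namespace IsInducedCycleFive

lemma rotate (h : IsInducedCycleFive Γ a b e d v) : IsInducedCycleFive Γ b e d v a where
  adj_ab := h.adj_be
  adj_be := h.adj_ed
  adj_ed := h.adj_dv
  not_adj_ae := h.not_adj_bd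
  not_adj_ad := h.not_adj_bv
  not_adj_bd := h.not_adj_ev
  adj_dv := h.adj_va
  adj_va := h.adj_ab
  not_adj_bv := mt .symm h.not_adj_ae
  not_adj_ev := mt .symm h.not_adj_ad

lemma ne_last (h : IsInducedCycleFive Γ a b e d v) : v ≠ a ∧ v ≠ b ∧ v ≠ e ∧ v ≠ d :=
  ⟨h.adj_va.ne, fun hvb => h.not_adj_ev (hvb ▸ h.adj_be.symm),
    fun hve => h.not_adj_bv (hve ▸ h.adj_be), h.adj_dv.ne'⟩

lemma nonempty_iso_cycleGraph (h : IsInducedCycleFive Γ a b e d v)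
    (hmem : ∀ k, k = a ∨ k = b ∨ k = e ∨ k = d ∨ k = v) :
    Nonempty (SimpleGraph.cycleGraph 5 ≃g Γ) := by
  have hadj : ∀ i j, Γ.Adj (![a, b, e, d, v] i) (![a, b, e, d, v] j) ↔
      (SimpleGraph.cycleGraph 5).Adj i j := by
    have hcycle : ∀ i j : Fin 5, (SimpleGraph.cycleGraph 5).Adj i j ↔
        j = ![1, 2, 3, 4, 0] i ∨ j = ![4, 0, 1, 2, 3] i := by decide
    intro i j
    rw [hcycle]
    fin_cases i <;> fin_cases j <;>
      simp [h.adj_table, h.rotate.adj_table, h.rotate.rotate.adj_table]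
  have hbij : Function.Bijective ![a, b, e, d, v] := by
    constructor
    · intro i j hij
      by_contra hne
      revert hij
      fin_cases i <;> fin_cases j <;>
        simp_all [h.ne_table, h.ne_last, h.ne_last.1.symm, h.ne_last.2.1.symm, h.ne_last.2.2.1.symm,
          h.ne_last.2.2.2.symm]
    · intro k
      rcases hmem k with rfl | rfl | rfl | rfl | rfl
      exacts [⟨0, rfl⟩, ⟨1, rfl⟩, ⟨2, rfl⟩, ⟨3, rfl⟩, ⟨4, rfl⟩]
  exact ⟨⟨Equiv.ofBijective _ hbij, hadj _ _⟩⟩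

end IsInducedCycleFive

variable [Fintype V] [DecidableEq V] [DecidableRel Γ.Adj] {μ : ℝ}

omit [DecidableEq V] in
lemma IsInducedPathFour.degree_eq_add_one (h : IsInducedPathFour Γ a b e d)
    (htwin : ∀ v, v ≠ a → v ≠ b → v ≠ e → v ≠ d → (Γ.Adj v a ↔ Γ.Adj v b)) :
    Γ.degree b = Γ.degree a + 1 := by
  classical
  have hpoint : ∀ v, (if Γ.Adj b v then 1 else 0) + (if v = b then 1 else 0) =
      (if Γ.Adj a v then 1 else 0) + (if v = a then 1 else 0) + if v = e then 1 else 0 := by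
    intro v
    by_cases hva : v = a
    · subst hva
      simp [h.adj_table, h.ne_table]
    by_cases hvb : v = b
    · subst hvb
      simp [h.adj_table, h.ne_table]
    by_cases hve : v = e
    · subst hve
      simp [h.adj_table, h.ne_table]
    by_cases hvd : v = d
    · subst hvd
      simp [h.adj_table, h.ne_table]
    simp [Γ.adj_comm _ v, hva, hvb, hve, htwin v hva hvb hve hvd]
  have hsum := Finset.sum_congr rfl fun v (_ : v ∈ Finset.univ) => hpoint v
  simp only [Finset.sum_add_distrib, Finset.sum_ite_eq', Finset.mem_univ, if_true,
    Finset.sum_boole, Nat.cast_id] at hsum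
  simp only [← SimpleGraph.card_neighborFinset_eq_degree, SimpleGraph.neighborFinset_eq_filter]
  omega

namespace IsLapExtremal

lemma exists_isInducedCycleFive (hext : IsLapExtremal Γ μ) (hcard : 5 ≤ Fintype.card V)
    (h : IsInducedPathFour Γ a b e d) : ∃ v, IsInducedCycleFive Γ a b e d v := by
  by_contra! hnone
  have htwins : ∀ v, v ≠ a → v ≠ b → v ≠ e → v ≠ d →
      (Γ.Adj v a ↔ Γ.Adj v b) ∧ (Γ.Adj v d ↔ Γ.Adj v e) ∧
        (μ - Γ.degree d = 1 ∨ μ - Γ.degree a = 1) := by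
    intro v hva hvb hve hvd
    rcases hext.adj_pattern h hva hvb hve hvd with
      ⟨ha, hb, he, hd, hμ⟩ | ⟨ha, hb, he, hd, hμ⟩ | ⟨ha, hb, he, hd, -⟩
    · simp [ha, hb, he, hd, hμ]
    · simp [ha, hb, he, hd, hμ]
    · exact (hnone v ⟨h, hd.symm, ha, mt .symm hb, mt .symm he⟩).elim
  have hb := h.degree_eq_add_one fun v ha hb he hd => (htwins v ha hb he hd).1
  have he := h.symm.degree_eq_add_one fun v hd he hb ha => (htwins v ha hb he hd).2.1
  have hμb := hext.degree_lt b
  have hμe := hext.degree_lt e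
  rw [hb, Nat.cast_succ] at hμb
  rw [he, Nat.cast_succ] at hμe
  obtain ⟨v, hva, hvb, hve, hvd⟩ := exists_forall_ne_of_five_le_card hcard a b e d
  rcases (htwins v hva hvb hve hvd).2.2 with hμ | hμ <;> linarith

lemma sq_sub_degree (hext : IsLapExtremal Γ μ) (h : IsInducedCycleFive Γ a b e d v) :
    (μ - Γ.degree a) ^ 2 = (μ - Γ.degree a) + 1 ∧ μ - Γ.degree a = μ - Γ.degree d := by
  obtain ⟨hva, hvb, hve, hvd⟩ := h.ne_last
  rcases hext.adj_pattern h.toIsInducedPathFour hva hvb hve hvd with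
    ⟨ha, -⟩ | ⟨-, hb, -⟩ | ⟨-, -, -, -, had, hsq⟩
  · exact absurd h.adj_va ha
  · exact absurd hb.symm h.not_adj_bv
  · exact ⟨hsq, had⟩

lemma adj_of_isInducedCycleFive (hext : IsLapExtremal Γ μ) (h : IsInducedCycleFive Γ a b e d v)
    {k : V} (hka : k ≠ a) (hkb : k ≠ b) (hke : k ≠ e) (hkd : k ≠ d) :
    Γ.Adj k a ∧ ¬ Γ.Adj k b := by
  obtain ⟨hsq, had⟩ := hext.sq_sub_degree h
  rcases hext.adj_pattern h.toIsInducedPathFour hka hkb hke hkd with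
    ⟨-, -, -, -, hμ⟩ | ⟨-, -, -, -, hμ⟩ | ⟨ha, hb, -⟩
  · rw [had, hμ] at hsq
    norm_num at hsq
  · rw [hμ] at hsq
    norm_num at hsq
  · exact ⟨ha, hb⟩

theorem cycleGraph_iso_of_isInducedPathFour (hext : IsLapExtremal Γ μ)
    (hcard : 5 ≤ Fintype.card V) (h : IsInducedPathFour Γ a b e d) :
    Nonempty (SimpleGraph.cycleGraph 5 ≃g Γ) ∧ (μ - 2) ^ 2 = (μ - 2) + 1 := by
  obtain ⟨v, hv⟩ := hext.exists_isInducedCycleFive hcard h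
  have hmem : ∀ k, k = a ∨ k = b ∨ k = e ∨ k = d ∨ k = v := by
    intro k
    by_contra! hk
    obtain ⟨hka, hkb, hke, hkd, hkv⟩ := hk
    exact (hext.adj_of_isInducedCycleFive hv hka hkb hke hkd).2
      (hext.adj_of_isInducedCycleFive hv.rotate hkb hke hkd hkv).1
  obtain ⟨φ⟩ := hv.nonempty_iso_cycleGraph hmem
  have hdeg : Γ.degree a = 2 := by
    rw [← φ.symm.degree_eq a, SimpleGraph.cycleGraph_degree_three_le]
  refine ⟨⟨φ⟩, ?_⟩
  simpa [hdeg] using (hext.sq_sub_degree hv).1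

end IsLapExtremal

end InducedCycleFive

section Cograph

variable {Γ : SimpleGraph V} {u v : V}

/-- `A` and `B` are nonempty disjoint sets of vertices with no edge of `Γ` between them. Maximal
such pairs drive the proof that a connected graph with connected complement has an induced path on
four vertices. -/
structure IsSeparatedPair (Γ : SimpleGraph V) (A B : Finset V) : Prop where
  nonempty_left : A.Nonempty
  nonempty_right : B.Nonempty
  disjoint : Disjoint A B
  not_adj : ∀ x ∈ A, ∀ y ∈ B, ¬ Γ.Adj x y

namespace IsSeparatedPair

variable {A B : Finset V}

lemma symm (h : IsSeparatedPair Γ A B) : IsSeparatedPair Γ B A :=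
  ⟨h.nonempty_right, h.nonempty_left, h.disjoint.symm, fun x hx y hy hxy =>
    h.not_adj y hy x hx hxy.symm⟩

lemma exists_adj_left (h : IsSeparatedPair Γ A B)
    (hmax : ∀ A' B', IsSeparatedPair Γ A' B' → A'.card + B'.card ≤ A.card + B.card)
    (hvA : v ∉ A) (hvB : v ∉ B) : ∃ x ∈ A, Γ.Adj v x := by
  classical
  by_contra! hnone
  have hpair : IsSeparatedPair Γ A (insert v B) :=
    ⟨h.nonempty_left, Finset.insert_nonempty v B,
      Finset.disjoint_insert_right.2 ⟨hvA, h.disjoint⟩,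
      fun x hx => Finset.forall_mem_insert _ _ _ |>.2
        ⟨fun hxv => hnone x hx hxv.symm, h.not_adj x hx⟩⟩
  have hle := hmax _ _ hpair
  rw [Finset.card_insert_of_notMem hvB] at hle
  omega

lemma adj_left (h : IsSeparatedPair Γ A B)
    (hmax : ∀ A' B', IsSeparatedPair Γ A' B' → A'.card + B'.card ≤ A.card + B.card)
    (hpath : ∀ a b e d, ¬ IsInducedPathFour Γ a b e d)
    (hvA : v ∉ A) (hvB : v ∉ B) (hu : u ∈ A) : Γ.Adj v u := by
  classical
  by_contra hvu
  obtain ⟨w, hwB, hvw⟩ := h.symm.exists_adj_left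
    (fun A' B' h' => (hmax A' B' h').trans_eq (add_comm _ _)) hvB hvA
  have hpair : IsSeparatedPair Γ {x ∈ A | ¬ Γ.Adj v x} (insert v ({x ∈ A | Γ.Adj v x} ∪ B)) := by
    refine ⟨⟨u, by simp [hu, hvu]⟩, Finset.insert_nonempty _ _, ?_, fun y hy x hx hyx => ?_⟩
    · refine Finset.disjoint_left.2 fun x hx => ?_
      simp only [Finset.mem_filter] at hx
      simp only [Finset.mem_insert, Finset.mem_union, Finset.mem_filter, hx, and_false, false_or,
        not_or]
      exact ⟨fun hxv => hvA (hxv ▸ hx.1), Finset.disjoint_left.1 h.disjoint hx.1⟩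
    · simp only [Finset.mem_filter] at hy
      simp only [Finset.mem_insert, Finset.mem_union, Finset.mem_filter] at hx
      rcases hx with rfl | ⟨hxA, hvx⟩ | hxB
      · exact hy.2 hyx.symm
      · exact hpath y x v w ⟨hyx, hvx.symm, hvw, mt .symm hy.2, h.not_adj y hy.1 w hwB,
          h.not_adj x hxA w hwB⟩
      · exact h.not_adj y hy.1 x hxB hyx
  have hle := hmax _ _ hpair
  have hdisj : Disjoint {x ∈ A | Γ.Adj v x} B :=
    Finset.disjoint_of_subset_left (Finset.filter_subset _ _) h.disjoint
  rw [Finset.card_insert_of_notMem (by simp [hvA, hvB]), Finset.card_union_of_disjoint hdisj] at hle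
  have hsplit := Finset.card_filter_add_card_filter_not (s := A) (fun x => Γ.Adj v x)
  omega

end IsSeparatedPair

lemma exists_maximal_isSeparatedPair [Finite V] {A B : Finset V} (h : IsSeparatedPair Γ A B) :
    ∃ A B, IsSeparatedPair Γ A B ∧
      ∀ A' B', IsSeparatedPair Γ A' B' → A'.card + B'.card ≤ A.card + B.card := by
  obtain ⟨p, hp, hmax⟩ := Set.Finite.exists_maximalFor
    (fun p : Finset V × Finset V => p.1.card + p.2.card) {p | IsSeparatedPair Γ p.1 p.2}
    (Set.toFinite _) ⟨(A, B), h⟩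
  exact ⟨p.1, p.2, hp, fun A' B' h' => (le_total _ _).elim id (hmax (j := (A', B')) h')⟩

theorem exists_isInducedPathFour [Finite V] [Nontrivial V] (hΓ : Γ.Preconnected)
    (hcompl : Γᶜ.Preconnected) : ∃ a b e d, IsInducedPathFour Γ a b e d := by
  by_contra! hpath
  obtain ⟨x, y, hxy⟩ : ∃ x y, Γᶜ.Adj x y :=
    ⟨_, hcompl.exists_adj_of_nontrivial (Classical.arbitrary V)⟩
  have hpair : IsSeparatedPair Γ {x} {y} :=
    ⟨Finset.singleton_nonempty x, Finset.singleton_nonempty y,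
      Finset.disjoint_singleton.2 hxy.ne, by simpa using hxy.2⟩
  obtain ⟨A, B, h, hmax⟩ := exists_maximal_isSeparatedPair hpair
  obtain ⟨a, ha⟩ := h.nonempty_left
  obtain ⟨b, hb⟩ := h.nonempty_right
  have hbA : b ∉ A := Finset.disjoint_right.1 h.disjoint hb
  have hjoin : ∀ v, v ∉ A ∧ v ∉ B → ∀ u, u ∈ A ∨ u ∈ B → Γ.Adj v u := fun v hv u hu =>
    hu.elim (h.adj_left hmax hpath hv.1 hv.2) (h.symm.adj_left
      (fun A' B' h' => (hmax A' B' h').trans_eq (add_comm _ _)) hpath hv.2 hv.1)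
  by_cases hall : ∀ v, v ∈ A ∨ v ∈ B
  · obtain ⟨x, hx, y, hy, hxy⟩ := exists_adj_mem_notMem (hΓ a b) (S := A) ha hbA
    exact h.not_adj x hx y ((hall y).resolve_left hy) hxy
  · push Not at hall
    obtain ⟨v, hv⟩ := hall
    obtain ⟨x, hx, y, hy, hxy⟩ := exists_adj_mem_notMem (hcompl a v) (S := {u | u ∈ A ∨ u ∈ B})
      (Or.inl ha) (by simpa using hv)
    exact hxy.2 (hjoin y (by simpa using hy) x hx).symm

end Cograph

section Disconnected

/-- `a`, `b`, `c` are the successive vertices of an induced path on three vertices. -/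
structure IsInducedPathThree (Γ : SimpleGraph V) (a b c : V) : Prop where
  adj_ab : Γ.Adj a b
  adj_bc : Γ.Adj b c
  compl_adj_ac : Γᶜ.Adj a c

variable {Γ : SimpleGraph V} {a b c k l u v : V}

lemma IsInducedPathThree.symm (h : IsInducedPathThree Γ a b c) : IsInducedPathThree Γ c b a :=
  ⟨h.adj_bc.symm, h.adj_ab.symm, h.compl_adj_ac.symm⟩

lemma compl_adj_of_not_reachable (h : ¬ Γ.Reachable u v) : Γᶜ.Adj u v :=
  ⟨fun huv => h (huv ▸ .rfl), fun huv => h huv.reachable⟩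

variable [Fintype V] [DecidableEq V] [DecidableRel Γ.Adj] {μ : ℝ}

namespace IsLapExtremal

lemma adj_and_sub_degree_eq_one (hext : IsLapExtremal Γ μ) (hkl : Γᶜ.Adj k l) (hka : Γᶜ.Adj k a)
    (hkb : Γᶜ.Adj k b) (hla : Γᶜ.Adj l a) (hlb : Γᶜ.Adj l b) (hab : a ≠ b) :
    Γ.Adj a b ∧ μ - Γ.degree a = 1 := by
  obtain ⟨α, β, γ, δ, hne, hsum, hrow⟩ := hext.dependent a b k l
  have ra := sub_pos.2 (hext.degree_lt a)
  have rk := sub_pos.2 (hext.degree_lt k)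
  have rl := sub_pos.2 (hext.degree_lt l)
  have hrowa := hrow a
  have hrowb := hrow b
  have hrowk := hrow k
  have hrowl := hrow l
  simp only [smul_one_sub_lapMatrix_apply_self, smul_one_sub_lapMatrix_apply_of_ne, ne_eq,
    hab, hab.symm, hkl.ne, hkl.ne', hka.ne, hka.ne', hkb.ne, hkb.ne', hla.ne, hla.ne', hlb.ne,
    hlb.ne', hkl.2, hkl.symm.2, hka.2, hka.symm.2, hkb.2, hkb.symm.2, hla.2, hla.symm.2, hlb.2,
    hlb.symm.2, not_false_eq_true, if_false, mul_zero, zero_add, add_zero,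
    Γ.adj_comm b a] at hrowa hrowb hrowk hrowl
  obtain rfl : γ = 0 := (mul_eq_zero.1 hrowk).resolve_right rk.ne'
  obtain rfl : δ = 0 := (mul_eq_zero.1 hrowl).resolve_right rl.ne'
  obtain rfl : β = -α := by linarith
  have hα : α ≠ 0 := fun hα => hne (by simp [hα])
  by_cases hadj : Γ.Adj a b
  · rw [if_pos hadj] at hrowa
    exact ⟨hadj, mul_left_cancel₀ hα (by linarith)⟩
  · rw [if_neg hadj, mul_zero, add_zero] at hrowa
    exact absurd ((mul_eq_zero.1 hrowa).resolve_right ra.ne') hα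

lemma exists_sub_degree_eq_one_of_triangle (hext : IsLapExtremal Γ μ) (hka : Γᶜ.Adj k a)
    (hkb : Γᶜ.Adj k b) (hkc : Γᶜ.Adj k c) (hab : Γ.Adj a b) (hac : Γ.Adj a c) (hbc : Γ.Adj b c) :
    ∃ v, μ - Γ.degree v = 1 := by
  obtain ⟨α, β, γ, δ, hne, hsum, hrow⟩ := hext.dependent a b c k
  have rk := sub_pos.2 (hext.degree_lt k)
  have hrowa := hrow a
  have hrowb := hrow b
  have hrowc := hrow c
  have hrowk := hrow k
  simp only [smul_one_sub_lapMatrix_apply_self, smul_one_sub_lapMatrix_apply_of_ne, ne_eq,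
    hab.ne, hab.ne', hac.ne, hac.ne', hbc.ne, hbc.ne', hka.ne, hka.ne', hkb.ne, hkb.ne', hkc.ne,
    hkc.ne', hab, hab.symm, hac, hac.symm, hbc, hbc.symm, hka.2, hka.symm.2, hkb.2, hkb.symm.2,
    hkc.2, hkc.symm.2, not_false_eq_true, if_true, if_false, mul_zero, mul_one, zero_add,
    add_zero] at hrowa hrowb hrowc hrowk
  obtain rfl : δ = 0 := (mul_eq_zero.1 hrowk).resolve_right rk.ne'
  by_contra! hnone
  have hα : α = 0 := (mul_eq_zero.1 (by linarith : α * (μ - Γ.degree a - 1) = 0)).resolve_right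
    (sub_ne_zero.2 (hnone a))
  have hβ : β = 0 := (mul_eq_zero.1 (by linarith : β * (μ - Γ.degree b - 1) = 0)).resolve_right
    (sub_ne_zero.2 (hnone b))
  exact hne ⟨hα, hβ, by linarith, rfl⟩

lemma exists_relation_of_isInducedPathThree (hext : IsLapExtremal Γ μ)
    (h : IsInducedPathThree Γ a b c) (hk : ¬ Γ.Reachable b k) :
    ∃ α β γ : ℝ, α ≠ 0 ∧ β ≠ 0 ∧ γ ≠ 0 ∧ α + β + γ = 0 ∧
      α * (μ - Γ.degree a) + β = 0 ∧ α + β * (μ - Γ.degree b) + γ = 0 ∧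
      ∀ v, v ≠ a → v ≠ b → v ≠ c → α * (if Γ.Adj v a then 1 else 0) +
        β * (if Γ.Adj v b then 1 else 0) + γ * (if Γ.Adj v c then 1 else 0) = 0 := by
  obtain ⟨hab, hbc, hac⟩ := h
  have hak : Γᶜ.Adj a k := compl_adj_of_not_reachable fun h => hk (hab.symm.reachable.trans h)
  have hbk : Γᶜ.Adj b k := compl_adj_of_not_reachable hk
  have hck : Γᶜ.Adj c k := compl_adj_of_not_reachable fun h => hk (hbc.reachable.trans h)
  obtain ⟨α, β, γ, δ, hne, hsum, hrow⟩ := hext.dependent a b c k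
  have ra := sub_pos.2 (hext.degree_lt a)
  have rk := sub_pos.2 (hext.degree_lt k)
  have hrowa := hrow a
  have hrowb := hrow b
  have hrowc := hrow c
  have hrowk := hrow k
  simp only [smul_one_sub_lapMatrix_apply_self, smul_one_sub_lapMatrix_apply_of_ne, ne_eq,
    hab.ne, hab.ne', hac.ne, hac.ne', hbc.ne, hbc.ne', hak.ne, hak.ne', hbk.ne, hbk.ne', hck.ne,
    hck.ne', hab, hab.symm, hac.2, hac.symm.2, hbc, hbc.symm, hak.2, hak.symm.2, hbk.2,
    hbk.symm.2, hck.2, hck.symm.2, not_false_eq_true, if_true, if_false, mul_zero, mul_one,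
    zero_add, add_zero] at hrowa hrowb hrowc hrowk
  obtain rfl : δ = 0 := (mul_eq_zero.1 hrowk).resolve_right rk.ne'
  have hα : α ≠ 0 := by
    rintro rfl
    obtain rfl : β = 0 := by linarith
    exact hne ⟨rfl, rfl, by linarith, rfl⟩
  have hγ : γ ≠ 0 := by
    rintro rfl
    obtain rfl : β = 0 := by linarith
    exact hα (by linarith)
  have hβ : β ≠ 0 := by
    rintro rfl
    exact hα ((mul_eq_zero.1 (by linarith : α * (μ - Γ.degree a) = 0)).resolve_right ra.ne')
  refine ⟨α, β, γ, hα, hβ, hγ, by linarith, hrowa, hrowb, fun v hva hvb hvc => ?_⟩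
  simpa only [smul_one_sub_lapMatrix_apply_of_ne Γ μ hva,
    smul_one_sub_lapMatrix_apply_of_ne Γ μ hvb, smul_one_sub_lapMatrix_apply_of_ne Γ μ hvc,
    zero_mul, add_zero] using hrow v

lemma sub_degree_middle_eq_one (hext : IsLapExtremal Γ μ) (h : IsInducedPathThree Γ a b c)
    (hk : ¬ Γ.Reachable b k) : μ - Γ.degree b = 1 := by
  obtain ⟨α, β, γ, -, hβ, -, hsum, -, hrow, -⟩ := hext.exists_relation_of_isInducedPathThree h hk
  exact mul_left_cancel₀ hβ (by linarith)

lemma sub_degree_end_ne_one (hext : IsLapExtremal Γ μ) (h : IsInducedPathThree Γ a b c)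
    (hk : ¬ Γ.Reachable b k) : μ - Γ.degree a ≠ 1 := by
  obtain ⟨α, β, γ, -, -, hγ, hsum, hrow, -⟩ := hext.exists_relation_of_isInducedPathThree h hk
  intro hra
  rw [hra] at hrow
  exact hγ (by linarith)

lemma adj_middle_iff_adj_end (hext : IsLapExtremal Γ μ) (h : IsInducedPathThree Γ a b c)
    (hk : ¬ Γ.Reachable b k) (hva : v ≠ a) (hvb : v ≠ b) (hvc : v ≠ c) :
    Γ.Adj v b ↔ Γ.Adj v a := by
  obtain ⟨α, β, γ, hα, hβ, -, hsum, -, -, hrow⟩ :=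
    hext.exists_relation_of_isInducedPathThree h hk
  replace hrow := hrow v hva hvb hvc
  by_cases ha : Γ.Adj v a <;> by_cases hb : Γ.Adj v b <;>
    simp only [ha, hb, if_true, if_false, iff_true, iff_false, not_true_eq_false] at hrow ⊢ <;>
    split_ifs at hrow <;> first | exact hα (by linarith) | exact hβ (by linarith)

end IsLapExtremal

end Disconnected

section BlowUp

lemma sum_comp_eq_sum_card_mul [Fintype V] [Fintype K] (τ : V → K) (f : K → ℕ) :
    ∑ v, f (τ v) = ∑ k, Nat.card {v // τ v = k} * f k := by
  classical
  simp [← Fintype.sum_fiberwise' τ f]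

/-- `G` arises from `T` by replacing each vertex `k` by an independent set of `size k` vertices. -/
def IsBlowUp (T : SimpleGraph K) (size : K → ℕ) (G : SimpleGraph V) : Prop :=
  ∃ τ : V → K, G = T.comap τ ∧ ∀ k, Nat.card {v // τ v = k} = size k

namespace IsBlowUp

variable {L : Type*} {T : SimpleGraph K} {T' : SimpleGraph L} {size : K → ℕ} {G : SimpleGraph V}
  {H : SimpleGraph W}

lemma nonempty_iso [Finite V] [Finite W] (hH : IsBlowUp T size H) (hG : IsBlowUp T size G) :
    Nonempty (H ≃g G) := by
  obtain ⟨σ, rfl, hσ⟩ := hH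
  obtain ⟨τ, rfl, hτ⟩ := hG
  let e (k : K) : {w // σ w = k} ≃ {v // τ v = k} :=
    (Finite.card_eq.1 ((hσ k).trans (hτ k).symm)).some
  let f : W ≃ V := (Equiv.sigmaFiberEquiv σ).symm.trans
    ((Equiv.sigmaCongrRight e).trans (Equiv.sigmaFiberEquiv τ))
  have hf : ∀ w, τ (f w) = σ w := fun w => (e (σ w) ⟨w, rfl⟩).2
  exact ⟨⟨f, by simp only [SimpleGraph.comap_adj, hf, implies_true]⟩⟩

lemma of_iso (φ : T' ≃g T) (hG : IsBlowUp T size G) : IsBlowUp T' (size ∘ φ) G := by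
  obtain ⟨τ, rfl, hτ⟩ := hG
  refine ⟨φ.symm ∘ τ, ?_, fun k => ?_⟩
  · ext u v
    exact (φ.symm.map_adj_iff (v := τ u) (w := τ v)).symm
  · rw [Function.comp_apply, ← hτ]
    exact Nat.card_congr (Equiv.subtypeEquivRight fun v => φ.symm_apply_eq)

variable [Fintype V] [Fintype K]

lemma sum_size (hG : IsBlowUp T size G) : ∑ k, size k = Fintype.card V := by
  obtain ⟨τ, -, hτ⟩ := hG
  simpa only [hτ, mul_one, Finset.sum_const, Finset.card_univ, smul_eq_mul] using
    (sum_comp_eq_sum_card_mul τ fun _ => 1).symm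

lemma sum_degree [DecidableRel T.Adj] [DecidableRel G.Adj] (hG : IsBlowUp T size G) :
    ∑ v, G.degree v = ∑ x, ∑ y, if T.Adj x y then size x * size y else 0 := by
  obtain ⟨τ, hadj, hτ⟩ := hG
  have hdeg : ∀ v, G.degree v = ∑ y, size y * if T.Adj (τ v) y then 1 else 0 := by
    intro v
    have hsum := sum_comp_eq_sum_card_mul τ fun y => if T.Adj (τ v) y then 1 else 0
    simp only [hτ] at hsum
    rw [← hsum, ← SimpleGraph.card_neighborFinset_eq_degree, SimpleGraph.neighborFinset_eq_filter,
      Finset.card_filter]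
    simp only [hadj, SimpleGraph.comap_adj]
  rw [Finset.sum_congr rfl fun v _ => hdeg v,
    sum_comp_eq_sum_card_mul τ fun x => ∑ y, size y * if T.Adj x y then 1 else 0]
  simp only [hτ, Finset.mul_sum, mul_ite, mul_one, mul_zero]

end IsBlowUp

end BlowUp

section Cliques

variable {Γ : SimpleGraph V} {a b c k u v x y : V}

lemma adj_trans_of_forall_not_isInducedPathThree (hpath : ∀ a b c, ¬ IsInducedPathThree Γ a b c)
    (hab : Γ.Adj a b) (hbc : Γ.Adj b c) (hac : a ≠ c) : Γ.Adj a c :=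
  by_contra fun h => hpath a b c ⟨hab, hbc, hac, h⟩

lemma compl_adj_of_compl_adj_of_adj (hpath : ∀ a b c, ¬ IsInducedPathThree Γ a b c)
    (hka : Γᶜ.Adj k a) (hab : Γ.Adj a b) : Γᶜ.Adj k b :=
  ⟨fun hkb => hka.2 (hkb ▸ hab.symm), fun hkb =>
    hka.2 (adj_trans_of_forall_not_isInducedPathThree hpath hkb hab.symm hka.1)⟩

variable [Fintype V] [DecidableEq V] [DecidableRel Γ.Adj] {μ : ℝ}

omit [DecidableEq V] in
lemma card_eq_or_adj (Γ : SimpleGraph V) [DecidableRel Γ.Adj] (v : V) :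
    Nat.card {w // w = v ∨ Γ.Adj v w} = Γ.degree v + 1 := by
  classical
  rw [← SimpleGraph.card_neighborFinset_eq_degree,
    ← Finset.card_insert_of_notMem (Γ.notMem_neighborFinset_self v), Nat.card_eq_fintype_card,
    Fintype.card_subtype]
  congr 1
  ext w
  simp

namespace IsLapExtremal

lemma exists_sub_degree_eq_one_of_three_cliques (hext : IsLapExtremal Γ μ)
    (hpath : ∀ a b c, ¬ IsInducedPathThree Γ a b c) (huv : Γᶜ.Adj u v) (hux : Γᶜ.Adj u x)
    (hvx : Γᶜ.Adj v x) (hyu : y ≠ u) (hyv : y ≠ v) (hyx : y ≠ x) : ∃ w, μ - Γ.degree w = 1 := by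
  by_cases hu : Γ.Adj u y
  · exact ⟨u, (hext.adj_and_sub_degree_eq_one hvx huv.symm
      (compl_adj_of_compl_adj_of_adj hpath huv.symm hu) hux.symm
      (compl_adj_of_compl_adj_of_adj hpath hux.symm hu) hyu.symm).2⟩
  by_cases hv : Γ.Adj v y
  · exact ⟨v, (hext.adj_and_sub_degree_eq_one hux huv
      (compl_adj_of_compl_adj_of_adj hpath huv hv) hvx.symm
      (compl_adj_of_compl_adj_of_adj hpath hvx.symm hv) hyv.symm).2⟩
  · exact ⟨x, (hext.adj_and_sub_degree_eq_one huv hux ⟨hyu.symm, hu⟩ hvx ⟨hyv.symm, hv⟩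
      hyx.symm).2⟩

lemma exists_sub_degree_eq_one (hext : IsLapExtremal Γ μ) (hcard : 5 ≤ Fintype.card V)
    (hpath : ∀ a b c, ¬ IsInducedPathThree Γ a b c) (huv : Γᶜ.Adj u v) :
    ∃ w, μ - Γ.degree w = 1 := by
  have htriangle : ∀ {u v x y}, Γᶜ.Adj u v → x ≠ y → Γ.Adj u x → Γ.Adj u y →
      ∃ w, μ - Γ.degree w = 1 := fun huv hxy hux huy =>
    hext.exists_sub_degree_eq_one_of_triangle huv.symm
      (compl_adj_of_compl_adj_of_adj hpath huv.symm hux)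
      (compl_adj_of_compl_adj_of_adj hpath huv.symm huy) hux huy
      (adj_trans_of_forall_not_isInducedPathThree hpath hux.symm huy hxy)
  obtain ⟨x, hxu, hxv, -⟩ := exists_forall_ne_of_five_le_card hcard u v u u
  obtain ⟨y, hyu, hyv, hyx, -⟩ := exists_forall_ne_of_five_le_card hcard u v x x
  obtain ⟨z, hzu, hzv, hzx, hzy⟩ := exists_forall_ne_of_five_le_card hcard u v x y
  by_cases hcover : ∀ w, w ≠ u → w ≠ v → Γ.Adj u w ∨ Γ.Adj v w
  · rcases hcover x hxu hxv with hx | hx <;> rcases hcover y hyu hyv with hy | hy <;>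
      rcases hcover z hzu hzv with hz | hz
    exacts [htriangle huv hyx hy hx, htriangle huv hyx hy hx, htriangle huv hzx hz hx,
      htriangle huv.symm hzy hz hy, htriangle huv hzy hz hy, htriangle huv.symm hzx hz hx,
      htriangle huv.symm hyx hy hx, htriangle huv.symm hyx hy hx]
  · push Not at hcover
    obtain ⟨w, hwu, hwv, hu, hv⟩ := hcover
    obtain ⟨y, hyu, hyv, hyw, -⟩ := exists_forall_ne_of_five_le_card hcard u v w w
    exact hext.exists_sub_degree_eq_one_of_three_cliques hpath huv ⟨hwu.symm, hu⟩ ⟨hwv.symm, hv⟩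
      hyu hyv hyw

theorem isBlowUp_top (hext : IsLapExtremal Γ μ) (hcard : 5 ≤ Fintype.card V)
    (hpath : ∀ a b c, ¬ IsInducedPathThree Γ a b c) (hcompl : Γᶜ.Preconnected) :
    ∃ size : Fin 3 → ℕ, μ = size 0 ∧ IsBlowUp ⊤ size Γᶜ := by
  have : Nontrivial V := Fintype.one_lt_card_iff_nontrivial.1 (by omega)
  obtain ⟨u₀, hu₀⟩ := hcompl.exists_adj_of_nontrivial (Classical.arbitrary V)
  obtain ⟨v, hv⟩ := hext.exists_sub_degree_eq_one hcard hpath hu₀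
  obtain ⟨u, hvu⟩ := hcompl.exists_adj_of_nontrivial v
  let τ : V → Fin 3 := fun w =>
    if w = v ∨ Γ.Adj v w then 0 else if w = u ∨ Γ.Adj u w then 1 else 2
  have hτ : ∀ w, τ w = 0 ↔ w = v ∨ Γ.Adj v w := fun w => by
    simp only [τ]
    split_ifs <;> simp_all
  have hadj : ∀ x y, x ≠ y → (Γ.Adj x y ↔ τ x = τ y) := by
    have htrans : ∀ x y z, Γ.Adj x y → Γ.Adj y z → x ≠ z → Γ.Adj x z := fun x y z =>
      adj_trans_of_forall_not_isInducedPathThree hpath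
    have hrest : ∀ x y, Γᶜ.Adj v x → Γᶜ.Adj v y → Γᶜ.Adj u x → Γᶜ.Adj u y → x ≠ y →
        Γ.Adj x y := fun x y hvx hvy hux huy hxy =>
      (hext.adj_and_sub_degree_eq_one hvu hvx hvy hux huy hxy).1
    intro x y hxy
    simp only [τ, SimpleGraph.compl_adj] at hrest hvu ⊢
    grind [SimpleGraph.adj_comm]
  refine ⟨fun k => Nat.card {w // τ w = k}, ?_, τ, ?_, fun k => rfl⟩
  · simp only [hτ, card_eq_or_adj]
    push_cast
    linarith
  · ext x y
    rcases eq_or_ne x y with rfl | hxy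
    · simp
    · simp [hadj x y hxy, hxy]

end IsLapExtremal

end Cliques

section Paw

/-- The paw: the triangle `0`, `1`, `2` with the pendant vertex `3` attached to `0`. -/
def paw : SimpleGraph (Fin 4) :=
  SimpleGraph.fromRel fun i j => i = 0 ∨ i = 1 ∧ j = 2

instance : DecidableRel paw.Adj := fun i j =>
  decidable_of_iff _ (SimpleGraph.fromRel_adj (fun i j : Fin 4 => i = 0 ∨ i = 1 ∧ j = 2) i j).symm

lemma paw_adj_iff : ∀ i j, paw.Adj i j ↔
    i ≠ j ∧ (i = 0 ∨ j = 0 ∨ i = 1 ∧ j = 2 ∨ i = 2 ∧ j = 1) := by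
  decide

variable {Γ : SimpleGraph V} {a b c k v x y : V}

lemma exists_isBlowUp_paw_compl [Finite V] {S : V → Prop} (ha : S a) (hc : S c)
    (hac : Γᶜ.Adj a c) (hS : ∀ x y, S x → S y → x ≠ y → x ≠ a → x ≠ c → Γ.Adj x y)
    (hSc : ∀ x y, ¬ S x → ¬ S y → x ≠ y → Γ.Adj x y)
    (hcross : ∀ x y, S x → ¬ S y → ¬ Γ.Adj x y) :
    ∃ size : Fin 4 → ℕ, size 0 = Nat.card {w // ¬ S w} ∧ size 1 = 1 ∧ size 2 = 1 ∧
      size 3 + 2 = Nat.card {w // S w} ∧ IsBlowUp paw size Γᶜ := by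
  classical
  have := Fintype.ofFinite V
  let τ : V → Fin 4 := fun w => if ¬ S w then 0 else if w = a then 1 else if w = c then 2 else 3
  have hτ0 : ∀ w, τ w = 0 ↔ ¬ S w := by grind
  have hτ1 : ∀ w, τ w = 1 ↔ w = a := by grind
  have hτ2 : ∀ w, τ w = 2 ↔ w = c := by grind [hac.ne]
  have hcard1 : Nat.card {w // τ w = 1} = 1 := by simp [hτ1]
  have hcard2 : Nat.card {w // τ w = 2} = 1 := by simp [hτ2]
  have hcardS : Nat.card {w // S w} = ∑ k, Nat.card {w // τ w = k} * if k = 0 then 0 else 1 := by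
    rw [← sum_comp_eq_sum_card_mul τ fun k => if k = 0 then 0 else 1,
      Nat.card_eq_fintype_card, Fintype.card_subtype, Finset.card_filter]
    simp only [hτ0, ite_not]
  refine ⟨fun k => Nat.card {w // τ w = k}, by simp only [hτ0], hcard1, hcard2, ?_, τ, ?_,
    fun k => rfl⟩
  · rw [hcardS, Fin.sum_univ_four, hcard1, hcard2]
    simp only [if_true, Fin.reduceEq, if_false]
    ring
  · ext x y
    rw [SimpleGraph.comap_adj, paw_adj_iff]
    grind [SimpleGraph.compl_adj, SimpleGraph.adj_comm]

variable [Fintype V] [DecidableEq V] [DecidableRel Γ.Adj] {μ : ℝ}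

namespace IsLapExtremal

lemma reachable_middle_iff (hext : IsLapExtremal Γ μ) (h : IsInducedPathThree Γ a b c)
    (hk : ¬ Γ.Reachable b k) : Γ.Reachable b v ↔ v = b ∨ Γ.Adj b v := by
  refine ⟨fun hbv => by_contra fun hv => ?_, ?_⟩
  · obtain ⟨x, hx, y, hy, hxy⟩ :=
      exists_adj_mem_notMem hbv (S := {v | v = b ∨ Γ.Adj b v}) (Or.inl rfl) hv
    obtain ⟨hyb, hby⟩ := not_or.1 hy
    have hbx : Γ.Adj b x := hx.resolve_left fun hxb => hby (hxb ▸ hxy)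
    exact hext.sub_degree_end_ne_one ⟨hbx, hxy, Ne.symm hyb, hby⟩
      (fun hxk => hk (hbx.reachable.trans hxk)) (hext.sub_degree_middle_eq_one h hk)
  · rintro (rfl | hbv)
    exacts [.rfl, hbv.reachable]

lemma adj_of_reachable_middle (hext : IsLapExtremal Γ μ) (h : IsInducedPathThree Γ a b c)
    (hk : ¬ Γ.Reachable b k) (hx : Γ.Reachable b x) (hy : Γ.Reachable b y) (hxy : x ≠ y)
    (hxa : x ≠ a) (hxc : x ≠ c) : Γ.Adj x y := by
  rw [hext.reachable_middle_iff h hk] at hx hy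
  rcases hx with rfl | hbx
  · exact hy.resolve_left hxy.symm
  rcases hy with rfl | hby
  · exact hbx.symm
  have hxa' := (hext.adj_middle_iff_adj_end h hk hxa hbx.ne' hxc).1 hbx.symm
  by_cases hya : y = a
  · exact hya ▸ hxa'
  by_cases hyc : y = c
  · exact hyc ▸ (hext.adj_middle_iff_adj_end h.symm hk hxc hbx.ne' hxa).1 hbx.symm
  have hya' := (hext.adj_middle_iff_adj_end h hk hya hby.ne' hyc).1 hby.symm
  by_contra hadj
  exact hext.sub_degree_end_ne_one h hk <| hext.sub_degree_middle_eq_one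
    ⟨hxa', hya'.symm, hxy, hadj⟩ fun hak => hk (h.adj_ab.symm.reachable.trans hak)

lemma adj_and_sub_degree_eq_one_of_not_reachable (hext : IsLapExtremal Γ μ)
    (h : IsInducedPathThree Γ a b c) (hx : ¬ Γ.Reachable b x) (hy : ¬ Γ.Reachable b y)
    (hxy : x ≠ y) : Γ.Adj x y ∧ μ - Γ.degree x = 1 := by
  have hend : ∀ {w z}, Γ.Adj b w → ¬ Γ.Reachable b z → Γᶜ.Adj w z := fun hbw hz =>
    compl_adj_of_not_reachable fun hwz => hz (hbw.reachable.trans hwz)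
  exact hext.adj_and_sub_degree_eq_one h.compl_adj_ac (hend h.adj_ab.symm hx)
    (hend h.adj_ab.symm hy) (hend h.adj_bc hx) (hend h.adj_bc hy) hxy

theorem isBlowUp_paw (hext : IsLapExtremal Γ μ) (h : IsInducedPathThree Γ a b c)
    (hk : ¬ Γ.Reachable b k) :
    ∃ size : Fin 4 → ℕ, size 0 ≠ 2 ∧ size 1 = 1 ∧ size 2 = 1 ∧ μ = size 3 + 2 ∧
      IsBlowUp paw size Γᶜ := by
  obtain ⟨size, h0, h1, h2, h3, hblow⟩ := exists_isBlowUp_paw_compl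
    (S := fun w => Γ.Reachable b w) h.adj_ab.symm.reachable h.adj_bc.reachable h.compl_adj_ac
    (fun x y hx hy hxy hxa hxc => hext.adj_of_reachable_middle h hk hx hy hxy hxa hxc)
    (fun x y hx hy hxy => (hext.adj_and_sub_degree_eq_one_of_not_reachable h hx hy hxy).1)
    (fun x y hx hy hxy => hy (hx.trans hxy.reachable))
  simp only [hext.reachable_middle_iff h hk, card_eq_or_adj] at h3
  have hμ : μ = size 3 + 2 := by
    have hdeg := hext.sub_degree_middle_eq_one h hk
    have h3' : (size 3 : ℝ) + 2 = Γ.degree b + 1 := by exact_mod_cast h3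
    linarith
  refine ⟨size, fun hsize => ?_, h1, h2, hμ, hblow⟩
  have hnbhd : ∀ w, ¬ Γ.Reachable b w ↔ w = k ∨ Γ.Adj k w := by
    refine fun w => ⟨fun hw => ?_, ?_⟩
    · exact or_iff_not_imp_left.2 fun hwk =>
        (hext.adj_and_sub_degree_eq_one_of_not_reachable h hk hw (Ne.symm hwk)).1
    · rintro (rfl | hkw)
      exacts [hk, fun hbw => hk (hbw.trans hkw.symm.reachable)]
  have hdegk : Γ.degree k = 1 := by
    simp only [hnbhd, card_eq_or_adj] at h0
    omega
  obtain ⟨l, hkl⟩ := (Γ.degree_pos_iff_exists_adj k).1 (by omega)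
  have hμk := (hext.adj_and_sub_degree_eq_one_of_not_reachable h hk
    ((hnbhd l).2 (Or.inr hkl)) hkl.ne).2
  have hdegb : 1 < Γ.degree b := Finset.one_lt_card.2
    ⟨a, by simpa using h.adj_ab.symm, c, by simpa using h.adj_bc, h.compl_adj_ac.ne⟩
  have hμb := hext.sub_degree_middle_eq_one h hk
  rw [hdegk] at hμk
  have : (Γ.degree b : ℝ) = 1 := by push_cast at hμk; linarith
  exact hdegb.ne' (by exact_mod_cast this)

end IsLapExtremal

end Paw

section Shape

/-- The blow-ups that occur as graphs on at least five vertices whose largest distance Laplacian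
eigenvalue `lam` has multiplicity at least `card V - 3`, apart from the complete graph; the
parameter is `μ = lam - card V`. -/
inductive IsExtremalShape (G : SimpleGraph V) (μ : ℝ) : Prop
  | multipartite {size : Fin 3 → ℕ} (hμ : μ = size 0) (hG : IsBlowUp ⊤ size G)
  | paw {size : Fin 4 → ℕ} (h0 : size 0 ≠ 2) (h1 : size 1 = 1) (h2 : size 2 = 1)
      (hμ : μ = (size 3 + 2 : ℕ)) (hG : IsBlowUp paw size G)
  | pentagon (hμ : (μ - 2) ^ 2 = (μ - 2) + 1)
      (hG : IsBlowUp (SimpleGraph.cycleGraph 5)ᶜ (fun _ => 1) G)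

lemma isBlowUp_compl_of_iso {T : SimpleGraph K} {Γ : SimpleGraph V} (φ : T ≃g Γ) :
    IsBlowUp Tᶜ (fun _ => 1) Γᶜ := by
  refine ⟨φ.symm, ?_, fun k => ?_⟩
  · ext u v
    rw [SimpleGraph.comap_adj, SimpleGraph.compl_adj, SimpleGraph.compl_adj, φ.symm.map_adj_iff,
      φ.symm.injective.ne_iff]
  · simp only [φ.symm_apply_eq, Nat.card_unique]

lemma IsLapExtremal.isExtremalShape_compl [Fintype V] [DecidableEq V] {Γ : SimpleGraph V}
    [DecidableRel Γ.Adj] {μ : ℝ} (hext : IsLapExtremal Γ μ) (hcard : 5 ≤ Fintype.card V)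
    (hcompl : Γᶜ.Preconnected) : IsExtremalShape Γᶜ μ := by
  by_cases hΓ : Γ.Preconnected
  · have : Nontrivial V := Fintype.one_lt_card_iff_nontrivial.1 (by omega)
    obtain ⟨a, b, e, d, h⟩ := exists_isInducedPathFour hΓ hcompl
    obtain ⟨⟨φ⟩, hμ⟩ := hext.cycleGraph_iso_of_isInducedPathFour hcard h
    exact .pentagon hμ (isBlowUp_compl_of_iso φ)
  by_cases hpath : ∃ a b c, IsInducedPathThree Γ a b c
  · obtain ⟨a, b, c, h⟩ := hpath
    obtain ⟨k, hk⟩ : ∃ k, ¬ Γ.Reachable b k := by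
      by_contra! hb
      exact hΓ fun u v => (hb u).symm.trans (hb v)
    obtain ⟨size, h0, h1, h2, hμ, hblow⟩ := hext.isBlowUp_paw h hk
    exact .paw h0 h1 h2 (mod_cast hμ) hblow
  · push Not at hpath
    obtain ⟨size, hμ, hblow⟩ := hext.isBlowUp_top hcard hpath hcompl
    exact .multipartite hμ hblow

lemma sq_natCast_sub_two_ne (m : ℕ) : ((m : ℝ) - 2) ^ 2 ≠ (m - 2) + 1 := by
  intro h
  have hmul : ((m : ℤ) - 2) * (m - 3) = 1 := by
    have : ((m : ℝ) - 2) * (m - 3) = 1 := by linear_combination h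
    exact_mod_cast this
  rcases Int.eq_one_or_neg_one_of_mul_eq_one' hmul with h | h <;> omega

lemma IsExtremalShape.isBlowUp_cycleGraph_compl {G : SimpleGraph V} {μ : ℝ}
    (hG : IsExtremalShape G μ) (hμ : (μ - 2) ^ 2 = (μ - 2) + 1) :
    IsBlowUp (SimpleGraph.cycleGraph 5)ᶜ (fun _ => 1) G := by
  rcases hG with ⟨rfl, -⟩ | ⟨-, -, -, rfl, -⟩ | ⟨-, hblow⟩
  · exact absurd hμ (sq_natCast_sub_two_ne _)
  · exact absurd hμ (sq_natCast_sub_two_ne _)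
  · exact hblow

namespace IsBlowUp

variable [Fintype V] [Fintype W] {G : SimpleGraph V} {H : SimpleGraph W} {size size' : Fin 3 → ℕ}
  {sizePaw sizePaw' : Fin 4 → ℕ}

lemma nonempty_iso_of_paw (hH : IsBlowUp paw sizePaw' H) (hG : IsBlowUp paw sizePaw G)
    (h1 : sizePaw' 1 = sizePaw 1) (h2 : sizePaw' 2 = sizePaw 2) (h3 : sizePaw' 3 = sizePaw 3)
    (hcard : Fintype.card W = Fintype.card V) : Nonempty (H ≃g G) := by
  have h0 : sizePaw' 0 = sizePaw 0 := by
    rw [← hH.sum_size, ← hG.sum_size, Fin.sum_univ_four, Fin.sum_univ_four] at hcard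
    omega
  have hsize : sizePaw' = sizePaw := by
    ext k
    fin_cases k <;> assumption
  exact (hsize ▸ hH).nonempty_iso hG

variable [DecidableRel G.Adj] [DecidableRel H.Adj]

lemma sum_degree_top (hG : IsBlowUp ⊤ size G) :
    ∑ v, G.degree v = 2 * (size 0 * (size 1 + size 2) + size 1 * size 2) := by
  rw [hG.sum_degree]
  simp only [SimpleGraph.top_adj, ne_eq, ite_not, Fin.sum_univ_three, Fin.isValue, ↓reduceIte,
    zero_ne_one, zero_add, Fin.reduceEq, one_ne_zero, add_zero]
  ring

lemma sum_degree_paw (hG : IsBlowUp paw sizePaw G) (h1 : sizePaw 1 = 1) (h2 : sizePaw 2 = 1) :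
    ∑ v, G.degree v = 2 * (sizePaw 0 * (sizePaw 3 + 2) + 1) := by
  rw [hG.sum_degree]
  simp only [paw_adj_iff, ne_eq, Fin.isValue, Fin.sum_univ_four, Fin.reduceEq, and_false,
    zero_ne_one, or_self, or_false, or_true, and_true, ite_not, one_ne_zero, false_or, h1, mul_one,
    h2, ↓reduceIte, not_false_eq_true, and_self, zero_add, one_mul, not_true_eq_false, add_zero]
  ring

lemma nonempty_iso_of_top (hH : IsBlowUp ⊤ size' H) (hG : IsBlowUp ⊤ size G)
    (h0 : size' 0 = size 0) (hcard : Fintype.card W = Fintype.card V)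
    (hdeg : ∑ w, H.degree w = ∑ v, G.degree v) : Nonempty (H ≃g G) := by
  have hadd : size' 1 + size' 2 = size 1 + size 2 := by
    rw [← hH.sum_size, ← hG.sum_size, Fin.sum_univ_three, Fin.sum_univ_three] at hcard
    omega
  have hmul : size' 1 * size' 2 = size 1 * size 2 := by
    rw [hH.sum_degree_top, hG.sum_degree_top, h0, hadd] at hdeg
    omega
  have hroots : size' 1 = size 1 ∨ size' 1 = size 2 := by
    have : ((size' 1 : ℤ) - size 1) * (size' 1 - size 2) = 0 := by
      zify at hadd hmul
      linear_combination (size' 1 : ℤ) * hadd - hmul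
    simpa [sub_eq_zero] using this
  rcases hroots with h1 | h1
  · have hsize : size' = size := by
      ext k
      fin_cases k
      exacts [h0, h1, by change size' 2 = size 2; omega]
    exact (hsize ▸ hH).nonempty_iso hG
  · have hsize : size' = size ∘ SimpleGraph.Iso.completeGraph (Equiv.swap 1 2) := by
      ext k
      fin_cases k
      exacts [h0, h1, by change size' 2 = size 1; omega]
    exact (hsize ▸ hH).nonempty_iso (hG.of_iso (SimpleGraph.Iso.completeGraph (Equiv.swap 1 2)))

lemma paw_size_zero_eq_two_of_top (hH : IsBlowUp paw sizePaw H) (hG : IsBlowUp ⊤ size G)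
    (h1 : sizePaw 1 = 1) (h2 : sizePaw 2 = 1) (h0 : size 0 = sizePaw 3 + 2)
    (hcard : Fintype.card W = Fintype.card V) (hdeg : ∑ w, H.degree w = ∑ v, G.degree v) :
    sizePaw 0 = 2 := by
  have hadd : size 1 + size 2 = sizePaw 0 := by
    rw [← hH.sum_size, ← hG.sum_size, Fin.sum_univ_three, Fin.sum_univ_four] at hcard
    omega
  have hmul : size 1 * size 2 = 1 := by
    rw [hH.sum_degree_paw h1 h2, hG.sum_degree_top, h0, hadd, mul_comm (sizePaw 0)] at hdeg
    omega
  obtain ⟨h1', h2'⟩ := mul_eq_one.1 hmul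
  omega

end IsBlowUp

theorem IsExtremalShape.nonempty_iso [Fintype V] [Fintype W] {G : SimpleGraph V}
    {H : SimpleGraph W} [DecidableRel G.Adj] [DecidableRel H.Adj] {μ : ℝ}
    (hH : IsExtremalShape H μ) (hG : IsExtremalShape G μ)
    (hcard : Fintype.card W = Fintype.card V) (hdeg : ∑ w, H.degree w = ∑ v, G.degree v) :
    Nonempty (H ≃g G) := by
  by_cases hgolden : (μ - 2) ^ 2 = (μ - 2) + 1
  · exact (hH.isBlowUp_cycleGraph_compl hgolden).nonempty_iso
      (hG.isBlowUp_cycleGraph_compl hgolden)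
  rcases hH with ⟨hμH, hH⟩ | ⟨h0H, h1H, h2H, hμH, hH⟩ | ⟨h, -⟩ <;>
    rcases hG with ⟨hμG, hG⟩ | ⟨h0G, h1G, h2G, hμG, hG⟩ | ⟨h, -⟩
  · exact hH.nonempty_iso_of_top hG (by exact_mod_cast hμH.symm.trans hμG) hcard hdeg
  · exact absurd (hG.paw_size_zero_eq_two_of_top hH h1G h2G
      (by exact_mod_cast hμH.symm.trans hμG) hcard.symm hdeg.symm) h0G
  · exact absurd h hgolden
  · exact absurd (hH.paw_size_zero_eq_two_of_top hG h1H h2H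
      (by exact_mod_cast hμG.symm.trans hμH) hcard hdeg) h0H
  · have h3 := Nat.cast_injective (R := ℝ) (hμH.symm.trans hμG)
    exact hH.nonempty_iso_of_paw hG (h1H.trans h1G.symm) (h2H.trans h2G.symm) (by omega) hcard
  all_goals exact absurd h hgolden

end Shape

section SpectralInvariants

variable [Fintype V] [DecidableEq V] [Fintype W] [DecidableEq W] {G : SimpleGraph V}
  {H : SimpleGraph W}

lemma dist_le_two_of_card_le_eigMult (hG : G.Connected) (hcard : 5 ≤ Fintype.card V)
    (hmult : Fintype.card V ≤ eigMult (distLaplacian G) (lambdaMax (distLaplacian G)) + 3)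
    (u v : V) : G.dist u v ≤ 2 := by
  by_cases hne : G = ⊤
  · subst hne
    rw [SimpleGraph.dist_top]
    split_ifs <;> omega
  · exact (isDistExtremal_lambdaMax hG hne hmult).dist_le_two hcard u v

lemma isExtremalShape_of_card_le_eigMult (hG : G.Connected) (hne : G ≠ ⊤)
    (hcard : 5 ≤ Fintype.card V)
    (hmult : Fintype.card V ≤ eigMult (distLaplacian G) (lambdaMax (distLaplacian G)) + 3) :
    IsExtremalShape G (lambdaMax (distLaplacian G) - Fintype.card V) := by
  classical
  have hext := (isDistExtremal_lambdaMax hG hne hmult).isLapExtremal_compl hcard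
  simpa only [compl_compl] using
    hext.isExtremalShape_compl hcard (by simpa only [compl_compl] using hG.preconnected)

lemma card_eq_of_roots_eq
    (hspec : (distLaplacian H).charpoly.roots = (distLaplacian G).charpoly.roots) :
    Fintype.card W = Fintype.card V := by
  rw [← card_roots_charpoly (isHermitian_distLaplacian H), hspec,
    card_roots_charpoly (isHermitian_distLaplacian G)]

lemma eigMult_lambdaMax_congr
    (hspec : (distLaplacian H).charpoly.roots = (distLaplacian G).charpoly.roots) :
    eigMult (distLaplacian H) (lambdaMax (distLaplacian H)) =
      eigMult (distLaplacian G) (lambdaMax (distLaplacian G)) := by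
  rw [eigMult_eq_count_roots_charpoly (isHermitian_distLaplacian H),
    eigMult_eq_count_roots_charpoly (isHermitian_distLaplacian G), lambdaMax_congr hspec, hspec]

variable [DecidableRel G.Adj] [DecidableRel H.Adj]

lemma sum_degree_compl_congr (hH : H.Connected) (hG : G.Connected)
    (hdiamH : ∀ u v, H.dist u v ≤ 2) (hdiamG : ∀ u v, G.dist u v ≤ 2)
    (hspec : (distLaplacian H).charpoly.roots = (distLaplacian G).charpoly.roots) :
    ∑ w, Hᶜ.degree w = ∑ v, Gᶜ.degree v := by
  have hcard := card_eq_of_roots_eq hspec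
  have htrace := trace_congr (isHermitian_distLaplacian H) (isHermitian_distLaplacian G) hspec
  rw [trace_distLaplacian, trace_distLaplacian] at htrace
  have hsum : ∑ w, transmission H w = ∑ v, transmission G v := by exact_mod_cast htrace
  have hsumH := Finset.sum_congr rfl fun w (_ : w ∈ Finset.univ) =>
    transmission_add_one hH hdiamH w
  have hsumG := Finset.sum_congr rfl fun v (_ : v ∈ Finset.univ) =>
    transmission_add_one hG hdiamG v
  simp only [Finset.sum_add_distrib, Finset.sum_const, Finset.card_univ, smul_eq_mul, hcard]
    at hsumH hsumG
  omega

lemma sum_degree_compl_eq_zero_iff : ∑ v, Gᶜ.degree v = 0 ↔ G = ⊤ := by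
  rw [Gᶜ.sum_degrees_eq_twice_card_edges, mul_eq_zero_iff_left two_ne_zero, Finset.card_eq_zero,
    SimpleGraph.edgeFinset_eq_empty, compl_eq_bot]

lemma sum_degree_add_sum_degree_compl (G : SimpleGraph V) [DecidableRel G.Adj] :
    ∑ v, G.degree v + ∑ v, Gᶜ.degree v = Fintype.card V * (Fintype.card V - 1) := by
  have hdeg : ∀ v, G.degree v + Gᶜ.degree v = Fintype.card V - 1 := fun v => by
    have := G.degree_lt_card_verts v
    rw [G.degree_compl]
    omega
  simp only [← Finset.sum_add_distrib, hdeg, Finset.sum_const, Finset.card_univ, smul_eq_mul]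

end SpectralInvariants

theorem determined_by_distLaplacian_spectrum_general [Fintype V] [DecidableEq V] [Fintype W]
    [DecidableEq W] {G : SimpleGraph V} {H : SimpleGraph W} (hcard : 5 ≤ Fintype.card V)
    (hG : G.Connected)
    (hmult : Fintype.card V ≤ eigMult (distLaplacian G) (lambdaMax (distLaplacian G)) + 3)
    (hH : H.Connected)
    (hspec : (distLaplacian H).charpoly.roots = (distLaplacian G).charpoly.roots) :
    Nonempty (H ≃g G) := by
  classical
  have hVW := card_eq_of_roots_eq hspec
  have hcardW := hVW.symm ▸ hcard
  have hmultH : Fintype.card W ≤ eigMult (distLaplacian H) (lambdaMax (distLaplacian H)) + 3 := by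
    rwa [hVW, eigMult_lambdaMax_congr hspec]
  have hcompl := sum_degree_compl_congr hH hG (dist_le_two_of_card_le_eigMult hH hcardW hmultH)
    (dist_le_two_of_card_le_eigMult hG hcard hmult) hspec
  have htop : H = ⊤ ↔ G = ⊤ := by
    rw [← sum_degree_compl_eq_zero_iff, hcompl, sum_degree_compl_eq_zero_iff]
  by_cases hGtop : G = ⊤
  · obtain rfl := htop.2 hGtop
    exact hGtop ▸ ⟨.completeGraph (Fintype.equivOfCardEq hVW)⟩
  have hshapeH := isExtremalShape_of_card_le_eigMult hH (mt htop.1 hGtop) hcardW hmultH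
  have hdeg := (sum_degree_add_sum_degree_compl H).trans
    (hVW.symm ▸ (sum_degree_add_sum_degree_compl G).symm)
  rw [lambdaMax_congr hspec, hVW] at hshapeH
  exact hshapeH.nonempty_iso (isExtremalShape_of_card_le_eigMult hG hGtop hcard hmult) hVW
    (by omega)

/-- Let `G` be a connected graph on `n ≥ 5` vertices whose largest distance
Laplacian eigenvalue has multiplicity `n - 3`. Then `G` is determined by its distance
Laplacian spectrum: any connected graph on `n` vertices with the same multiset of distance
Laplacian eigenvalues is isomorphic to `G`. -/
theorem determined_by_distLaplacian_spectrum
    (n : ℕ) (hn : 5 ≤ n) (G : SimpleGraph (Fin n)) (hG : G.Connected)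
    (hmult : eigMult (distLaplacian G) (lambdaMax (distLaplacian G)) = n - 3)
    (H : SimpleGraph (Fin n)) (hH : H.Connected)
    (hspec : (distLaplacian H).charpoly.roots = (distLaplacian G).charpoly.roots) :
    Nonempty (H ≃g G) :=
  determined_by_distLaplacian_spectrum_general ((Fintype.card_fin n).symm ▸ hn) hG
    (by rw [Fintype.card_fin]; omega) hH hspec
end

section
/- For an even integer n ≥ 6, the distance Laplacian spectrum of the graph K_{n/2,n/2}+e is {(3n/2) with multiplicity n−3, 3n/2 − 2, n, 0}; the distance Laplacian spectrum of K_{2,n−2} is {(2n−2) with multiplicity n−3, n+2, n, 0} for every integer n ≥ 6; and the distance Laplacian spectrum of K_{1,n−1}+e is {(2n−1) with multiplicity n−3, 2n−3, n, 0} for every integer n ≥ 6. -/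
open Matrix

/-- The star `K_{1,k+2}` together with an extra edge joining two pendant vertices:
the centre is the `Unit` vertex, the pendant vertices are `Bool ⊕ Fin k`, and the extra
edge joins the two `Bool` pendant vertices.  (It has `k + 3` vertices.) -/
def starPlusEdge (k : ℕ) : SimpleGraph (Unit ⊕ Bool ⊕ Fin k) :=
  completeBipartiteGraph Unit (Bool ⊕ Fin k) ⊔
    SimpleGraph.fromEdgeSet {s(Sum.inr (Sum.inl false), Sum.inr (Sum.inl true))}

/-- The complete bipartite graph `K_{k+2,k+2}` together with an extra edge joining two
vertices on the same side (the two `Bool` vertices). -/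
def bipPlusEdge (k : ℕ) : SimpleGraph ((Bool ⊕ Fin k) ⊕ Fin (k + 2)) :=
  completeBipartiteGraph (Bool ⊕ Fin k) (Fin (k + 2)) ⊔
    SimpleGraph.fromEdgeSet {s(Sum.inl (Sum.inl false), Sum.inl (Sum.inl true))}

/-!
In a graph of diameter at most two, non-adjacent distinct vertices are at distance `2`, so the
distance Laplacian is `2n I - L - 2J` with `L` the Laplacian and `J` the all-ones matrix. Since the
all-ones vector spans the image of `J` and is an eigenvector of `L`, adding a multiple of `J` moves
only the eigenvalue of that vector (Brauer). Each of the three graphs is a join: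
`K_{a,b} = aK₁ ∨ bK₁`, `K_{1,n-1}+e = K₁ ∨ (K₂ ∪ (n-3)K₁)` and
`K_{p,p}+e = (K₂ ∪ (p-2)K₁) ∨ pK₁`. The Laplacian of a join is a block diagonal matrix minus `J`, so
Brauer's theorem also gives its spectrum.
-/

section RankOne

open Polynomial

variable {R m : Type*} [CommRing R] [Fintype m] [DecidableEq m]

theorem mul_det_add_vecMulVec_of_mulVec_eq_smul {A : Matrix m m R} {u : m → R} {c : R}
    (h : A *ᵥ u = c • u) (v : m → R) :
    c * (A + vecMulVec u v).det = (c + v ⬝ᵥ u) * A.det := by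
  let B : Matrix (m ⊕ Unit) (m ⊕ Unit) R :=
    fromBlocks A (replicateCol Unit u) (-replicateRow Unit v) 1
  let P : Matrix (m ⊕ Unit) (m ⊕ Unit) R :=
    fromBlocks 1 (replicateCol Unit u) 0 (-c • 1)
  -- `P` clears the last column of `B`; going through `B` avoids inverting `A` or `c`.
  have hB : B.det = (A + vecMulVec u v).det := by
    rw [det_fromBlocks_one₂₂, vecMulVec_eq Unit, Matrix.mul_neg, sub_neg_eq_add]
  have hBP : B * P = fromBlocks A 0 (-replicateRow Unit v) (-(c + v ⬝ᵥ u) • 1) := by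
    have hAu : A * replicateCol Unit u = c • replicateCol Unit u := by
      rw [← replicateCol_mulVec, h, replicateCol_smul]
    have hvu : replicateRow Unit v * replicateCol Unit u = (v ⬝ᵥ u) • 1 := by
      ext
      simp [Matrix.mul_apply, dotProduct]
    simp [B, P, fromBlocks_multiply, hAu, hvu, add_smul, add_comm]
  have hdet := congrArg det hBP
  rw [det_mul, hB, det_fromBlocks_zero₂₁, det_fromBlocks_zero₁₂] at hdet
  simp only [det_one, one_mul, mul_one, det_smul, Fintype.card_unit, pow_one] at hdet
  linear_combination -hdet

theorem charpoly_add_vecMulVec_of_mulVec_eq_smul {M : Matrix m m R} {u : m → R} {c : R}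
    (h : M *ᵥ u = c • u) (v : m → R) :
    (X - C c) * (M + vecMulVec u v).charpoly = (X - C (c + v ⬝ᵥ u)) * M.charpoly := by
  have hu : M.charmatrix *ᵥ (C ∘ u) = (X - C c) • (C ∘ u) := by
    ext1 i
    have hi : (M *ᵥ u) i = c * u i := congrFun h i
    simp [charmatrix, sub_mulVec, ← RingHom.map_mulVec, hi, sub_mul]
  have hchar : (M + vecMulVec u v).charmatrix =
      M.charmatrix + vecMulVec (C ∘ u) (-(C ∘ v)) := by
    ext1 i j
    simp only [charmatrix, RingHom.mapMatrix_apply, Matrix.sub_apply, map_apply, Matrix.add_apply,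
      vecMulVec_apply, map_add, map_mul, vecMulVec_neg, Matrix.neg_apply, Function.comp_apply]
    ring
  have hdot : -(C ∘ v) ⬝ᵥ (C ∘ u) = -C (v ⬝ᵥ u) := by
    rw [neg_dotProduct, RingHom.map_dotProduct]
  rw [charpoly, hchar, mul_det_add_vecMulVec_of_mulVec_eq_smul hu, hdot, charpoly, C_add]
  ring

theorem charpoly_smul_add_smul_one_comp (M : Matrix m m R) (c a : R) :
    (c • M + a • 1).charpoly.comp (C c * X + C a) = C (c ^ Fintype.card m) * M.charpoly := by
  have hmap : (compRingHom (C c * X + C a)).mapMatrix (c • M + a • 1).charmatrix =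
      C c • M.charmatrix := by
    ext1 i j
    by_cases hij : i = j <;> simp [charmatrix, hij, mul_sub]
  rw [charpoly, ← coe_compRingHom_apply, RingHom.map_det, hmap, det_smul, C_pow, charpoly]

variable [IsDomain R]

theorem roots_charpoly_add_vecMulVec {M : Matrix m m R} {u : m → R} {c : R} {s : Multiset R}
    (h : M *ᵥ u = c • u) (hs : M.charpoly.roots = c ::ₘ s) (v : m → R) :
    (M + vecMulVec u v).charpoly.roots = (c + v ⬝ᵥ u) ::ₘ s := by
  have hroots := congrArg roots (charpoly_add_vecMulVec_of_mulVec_eq_smul h v)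
  rw [roots_mul (mul_ne_zero (X_sub_C_ne_zero _) (charpoly_monic _).ne_zero),
    roots_mul (mul_ne_zero (X_sub_C_ne_zero _) (charpoly_monic _).ne_zero),
    roots_X_sub_C, roots_X_sub_C, hs, Multiset.singleton_add, Multiset.singleton_add,
    Multiset.cons_swap] at hroots
  exact (Multiset.cons_inj_right c).1 hroots

theorem roots_charpoly_smul_add_smul_one (M : Matrix m m R) {c : R} (hc : IsUnit c) (a : R) :
    (c • M + a • 1).charpoly.roots = M.charpoly.roots.map fun x ↦ c * x + a := by
  have hroots : ((c • M + a • 1).charpoly.comp (C c * X + C a)).roots = M.charpoly.roots := by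
    rw [charpoly_smul_add_smul_one_comp, roots_C_mul _ (pow_ne_zero _ hc.ne_zero)]
  rw [← map_roots_comp_C_mul_X_add_C _ c a hc, hroots]

theorem roots_charpoly_smul_add_smul_one_add_smul_ones {M : Matrix m m R} {s : Multiset R}
    (h : M *ᵥ 1 = 0) (hs : M.charpoly.roots = 0 ::ₘ s) {c : R} (hc : IsUnit c) (a b : R) :
    (c • M + a • 1 + b • vecMulVec 1 1).charpoly.roots =
      (a + Fintype.card m * b) ::ₘ s.map fun x ↦ c * x + a := by
  have hone : (c • M + a • 1) *ᵥ 1 = a • 1 := by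
    simp [add_mulVec, smul_mulVec, h]
  have hroots : (c • M + a • 1).charpoly.roots = a ::ₘ s.map fun x ↦ c * x + a := by
    simp [roots_charpoly_smul_add_smul_one M hc, hs]
  rw [← vecMulVec_smul, roots_charpoly_add_vecMulVec hone hroots]
  simp [mul_comm]

theorem roots_charpoly_fromBlocks_zero {n : Type*} [Fintype n] [DecidableEq n]
    (A : Matrix m m R) (D : Matrix n n R) :
    (fromBlocks A 0 0 D).charpoly.roots = A.charpoly.roots + D.charpoly.roots := by
  rw [charpoly_fromBlocks_zero₁₂,
    roots_mul (mul_ne_zero (charpoly_monic A).ne_zero (charpoly_monic D).ne_zero)]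

end RankOne

/-- The join of two graphs: their disjoint union together with all edges between a vertex of `G`
and a vertex of `H`. -/
def graphJoin {V W : Type*} (G : SimpleGraph V) (H : SimpleGraph W) : SimpleGraph (V ⊕ W) :=
  (G ⊕g H) ⊔ completeBipartiteGraph V W

open SimpleGraph

section Laplacian

variable {V W : Type*} [Fintype V] [DecidableEq V] [Fintype W] [DecidableEq W]

section Matrix

variable (R : Type*) [CommRing R]

theorem lapMatrix_apply (G : SimpleGraph V) [DecidableRel G.Adj] (u v : V) :
    G.lapMatrix R u v =
      (if u = v then ∑ w, if G.Adj u w then 1 else 0 else 0) - if G.Adj u v then 1 else 0 := by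
  simp [lapMatrix, degMatrix, diagonal_apply, degree_eq_sum_if_adj, -Finset.sum_boole]

theorem lapMatrix_bot : (⊥ : SimpleGraph V).lapMatrix R = 0 := by
  ext u v
  simp [lapMatrix_apply]

theorem lapMatrix_top :
    (⊤ : SimpleGraph V).lapMatrix R = (Fintype.card V : R) • 1 - vecMulVec 1 1 := by
  ext u v
  by_cases huv : u = v
  · have : 1 ≤ Fintype.card V := Fintype.card_pos_iff.2 ⟨u⟩
    simp [lapMatrix, degMatrix, huv, this]
  · simp [lapMatrix, degMatrix, huv]

theorem lapMatrix_sum (G : SimpleGraph V) (H : SimpleGraph W) [DecidableRel G.Adj]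
    [DecidableRel H.Adj] [DecidableRel (G ⊕g H).Adj] :
    (G ⊕g H).lapMatrix R = fromBlocks (G.lapMatrix R) 0 0 (H.lapMatrix R) := by
  ext (u | u) (v | v) <;> simp [lapMatrix_apply, -Finset.sum_boole]

theorem lapMatrix_graphJoin (G : SimpleGraph V) (H : SimpleGraph W)
    [DecidableRel G.Adj] [DecidableRel H.Adj] [DecidableRel (graphJoin G H).Adj] :
    (graphJoin G H).lapMatrix R =
      fromBlocks (G.lapMatrix R + (Fintype.card W : R) • 1 + vecMulVec 1 1) 0 0
        (H.lapMatrix R + (Fintype.card V : R) • 1 + vecMulVec 1 1) - vecMulVec 1 1 := by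
  ext (u | u) (v | v) <;> rw [lapMatrix_apply]
  case inl.inl | inr.inr =>
    by_cases huv : u = v <;> simp [lapMatrix_apply, graphJoin, huv, add_comm]
  all_goals simp [graphJoin]

variable {R} in
theorem lapMatrix_add_smul_one_add_ones_mulVec_one (G : SimpleGraph V) [DecidableRel G.Adj]
    (a : R) :
    (G.lapMatrix R + a • 1 + vecMulVec 1 1) *ᵥ 1 = (a + Fintype.card V) • (1 : V → R) := by
  have hG : G.lapMatrix R *ᵥ 1 = 0 := lapMatrix_mulVec_const_eq_zero G
  rw [add_mulVec, add_mulVec, hG, smul_mulVec, one_mulVec, vecMulVec_mulVec]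
  ext
  simp

end Matrix

section Roots

variable {R : Type*} [CommRing R] [IsDomain R]

theorem roots_charpoly_lapMatrix_bot :
    ((⊥ : SimpleGraph V).lapMatrix R).charpoly.roots = Multiset.replicate (Fintype.card V) 0 := by
  rw [lapMatrix_bot, charpoly_zero, Polynomial.roots_X_pow, Multiset.nsmul_singleton]

theorem roots_charpoly_lapMatrix_bot_of_nonempty [Nonempty V] :
    ((⊥ : SimpleGraph V).lapMatrix R).charpoly.roots =
      0 ::ₘ Multiset.replicate (Fintype.card V - 1) 0 := by
  rw [roots_charpoly_lapMatrix_bot, ← Multiset.replicate_succ,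
    Nat.sub_add_cancel Fintype.card_pos]

theorem roots_charpoly_lapMatrix_top [Nonempty V] :
    ((⊤ : SimpleGraph V).lapMatrix R).charpoly.roots =
      0 ::ₘ Multiset.replicate (Fintype.card V - 1) (Fintype.card V : R) := by
  have hbot := roots_charpoly_smul_add_smul_one_add_smul_ones (lapMatrix_mulVec_const_eq_zero ⊥)
    (roots_charpoly_lapMatrix_bot_of_nonempty (V := V) (R := R)) isUnit_one (Fintype.card V) (-1)
  rw [lapMatrix_top]
  simpa [lapMatrix_bot, ← sub_eq_add_neg] using hbot

theorem roots_charpoly_lapMatrix_sum (G : SimpleGraph V) (H : SimpleGraph W) [DecidableRel G.Adj]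
    [DecidableRel H.Adj] [DecidableRel (G ⊕g H).Adj] :
    ((G ⊕g H).lapMatrix R).charpoly.roots =
      (G.lapMatrix R).charpoly.roots + (H.lapMatrix R).charpoly.roots := by
  rw [lapMatrix_sum, roots_charpoly_fromBlocks_zero]

theorem roots_charpoly_lapMatrix_top_sum_bot [Nonempty V]
    [DecidableRel ((⊤ : SimpleGraph V) ⊕g (⊥ : SimpleGraph W)).Adj] :
    (((⊤ : SimpleGraph V) ⊕g (⊥ : SimpleGraph W)).lapMatrix R).charpoly.roots =
      0 ::ₘ (Multiset.replicate (Fintype.card V - 1) (Fintype.card V : R) +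
        Multiset.replicate (Fintype.card W) 0) := by
  rw [roots_charpoly_lapMatrix_sum, roots_charpoly_lapMatrix_top, roots_charpoly_lapMatrix_bot,
    Multiset.cons_add]

theorem roots_charpoly_lapMatrix_add_smul_one_add_ones {G : SimpleGraph V} [DecidableRel G.Adj]
    {s : Multiset R} (hG : (G.lapMatrix R).charpoly.roots = 0 ::ₘ s) (a : R) :
    (G.lapMatrix R + a • 1 + vecMulVec 1 1).charpoly.roots =
      (a + Fintype.card V) ::ₘ s.map (· + a) := by
  simpa using roots_charpoly_smul_add_smul_one_add_smul_ones (lapMatrix_mulVec_const_eq_zero G) hG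
    isUnit_one a 1

theorem roots_charpoly_lapMatrix_graphJoin {G : SimpleGraph V} {H : SimpleGraph W}
    [DecidableRel G.Adj] [DecidableRel H.Adj] [DecidableRel (graphJoin G H).Adj]
    {s t : Multiset R} (hG : (G.lapMatrix R).charpoly.roots = 0 ::ₘ s)
    (hH : (H.lapMatrix R).charpoly.roots = 0 ::ₘ t) :
    ((graphJoin G H).lapMatrix R).charpoly.roots =
      0 ::ₘ (Fintype.card V + Fintype.card W : R) ::ₘ
        (s.map (· + (Fintype.card W : R)) + t.map (· + (Fintype.card V : R))) := by
  have hone : fromBlocks (G.lapMatrix R + (Fintype.card W : R) • 1 + vecMulVec 1 1) 0 0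
      (H.lapMatrix R + (Fintype.card V : R) • 1 + vecMulVec 1 1) *ᵥ 1 =
        (Fintype.card V + Fintype.card W : R) • 1 := by
    rw [fromBlocks_mulVec, Pi.one_comp, Pi.one_comp, zero_mulVec, zero_mulVec, add_zero, zero_add,
      lapMatrix_add_smul_one_add_ones_mulVec_one, lapMatrix_add_smul_one_add_ones_mulVec_one]
    ext (v | w) <;> simp [add_comm]
  have hroots : (fromBlocks (G.lapMatrix R + (Fintype.card W : R) • 1 + vecMulVec 1 1) 0 0
      (H.lapMatrix R + (Fintype.card V : R) • 1 + vecMulVec 1 1)).charpoly.roots =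
        (Fintype.card V + Fintype.card W : R) ::ₘ (Fintype.card V + Fintype.card W : R) ::ₘ
          (s.map (· + (Fintype.card W : R)) + t.map (· + (Fintype.card V : R))) := by
    rw [roots_charpoly_fromBlocks_zero, roots_charpoly_lapMatrix_add_smul_one_add_ones hG,
      roots_charpoly_lapMatrix_add_smul_one_add_ones hH, Multiset.cons_add, Multiset.add_cons,
      add_comm (Fintype.card W : R)]
  rw [lapMatrix_graphJoin, sub_eq_add_neg, ← vecMulVec_neg,
    roots_charpoly_add_vecMulVec hone hroots]
  simp

end Roots

end Laplacian

section DistLaplacian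

variable {V W : Type*}

theorem dist_eq_ite_of_ediam_le_two [DecidableEq V] {G : SimpleGraph V} [DecidableRel G.Adj]
    (hG : G.ediam ≤ 2) (u v : V) :
    G.dist u v = if u = v then 0 else if G.Adj u v then 1 else 2 := by
  have hedist : G.edist u v ≤ 2 := edist_le_ediam.trans hG
  have hreach : G.Reachable u v :=
    edist_ne_top_iff_reachable.1 (ne_top_of_le_ne_top (by simp) hedist)
  have hdist : G.dist u v ≤ 2 := by
    rw [← hreach.coe_dist_eq_edist] at hedist
    exact_mod_cast hedist
  have hzero := hreach.dist_eq_zero_iff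
  have hone : G.dist u v = 1 ↔ G.Adj u v := dist_eq_one_iff_adj
  split_ifs <;> lia

theorem ediam_graphJoin_le_two [Nonempty V] [Nonempty W] (G : SimpleGraph V) (H : SimpleGraph W) :
    (graphJoin G H).ediam ≤ 2 := by
  have hadj (v : V) (w : W) : (graphJoin G H).Adj (.inl v) (.inr w) := by simp [graphJoin]
  have v₀ := Classical.arbitrary V
  have w₀ := Classical.arbitrary W
  refine ediam_le_of_edist_le fun x y ↦ ?_
  obtain ⟨p, hp⟩ : ∃ p : (graphJoin G H).Walk x y, p.length ≤ 2 := by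
    rcases x with v | w <;> rcases y with v' | w'
    · exact ⟨.cons (hadj v w₀) (hadj v' w₀).symm.toWalk, le_rfl⟩
    · exact ⟨(hadj v w').toWalk, one_le_two⟩
    · exact ⟨(hadj v' w).symm.toWalk, one_le_two⟩
    · exact ⟨.cons (hadj v₀ w).symm (hadj v₀ w').toWalk, le_rfl⟩
  exact p.edist_le.trans (by exact_mod_cast hp)

variable [Fintype V] [DecidableEq V] [Fintype W] [DecidableEq W]

theorem distLaplacian_eq_of_ediam_le_two {G : SimpleGraph V} [DecidableRel G.Adj]
    (hG : G.ediam ≤ 2) :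
    distLaplacian G =
      (2 * Fintype.card V : ℝ) • 1 - G.lapMatrix ℝ - (2 : ℝ) • vecMulVec 1 1 := by
  have hdist (u v : V) :
      (G.dist u v : ℝ) = 2 - (if u = v then 2 else 0) - if G.Adj u v then 1 else 0 := by
    rw [dist_eq_ite_of_ediam_le_two hG]
    by_cases huv : u = v
    · simp [huv]
    · by_cases hadj : G.Adj u v <;> norm_num [huv, hadj]
  ext u v
  by_cases huv : u = v
  · simp [distLaplacian, hdist, lapMatrix_apply, huv, mul_comm, sub_right_comm, -Finset.sum_boole]
  · simp [distLaplacian, hdist, lapMatrix_apply, huv, -Finset.sum_boole]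

theorem roots_charpoly_distLaplacian_of_ediam_le_two {G : SimpleGraph V} [DecidableRel G.Adj]
    (hG : G.ediam ≤ 2) {s : Multiset ℝ} (hs : (G.lapMatrix ℝ).charpoly.roots = 0 ::ₘ s) :
    (distLaplacian G).charpoly.roots = 0 ::ₘ s.map fun x ↦ 2 * (Fintype.card V : ℝ) - x := by
  have hmat : distLaplacian G = (-1 : ℝ) • G.lapMatrix ℝ + (2 * Fintype.card V : ℝ) • 1 +
      (-2 : ℝ) • vecMulVec 1 1 := by
    rw [distLaplacian_eq_of_ediam_le_two hG]
    module
  rw [hmat, roots_charpoly_smul_add_smul_one_add_smul_ones (lapMatrix_mulVec_const_eq_zero G) hs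
    isUnit_one.neg]
  congr 1
  · ring
  · exact Multiset.map_congr rfl fun x _ ↦ by ring

theorem roots_charpoly_distLaplacian_graphJoin [Nonempty V] [Nonempty W] {G : SimpleGraph V}
    {H : SimpleGraph W} [DecidableRel G.Adj] [DecidableRel H.Adj] {s t : Multiset ℝ}
    (hG : (G.lapMatrix ℝ).charpoly.roots = 0 ::ₘ s)
    (hH : (H.lapMatrix ℝ).charpoly.roots = 0 ::ₘ t) :
    (distLaplacian (graphJoin G H)).charpoly.roots =
      (s.map fun x ↦ 2 * (Fintype.card V : ℝ) + Fintype.card W - x) +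
        (t.map fun x ↦ (Fintype.card V : ℝ) + 2 * Fintype.card W - x) +
          {(Fintype.card V + Fintype.card W : ℝ), 0} := by
  classical
  rw [roots_charpoly_distLaplacian_of_ediam_le_two (ediam_graphJoin_le_two G H)
    (roots_charpoly_lapMatrix_graphJoin hG hH)]
  simp only [Multiset.map_cons, Multiset.map_add, Multiset.map_map, Function.comp_def,
    Fintype.card_sum, Nat.cast_add]
  have hs : (s.map fun x ↦ 2 * (Fintype.card V + Fintype.card W : ℝ) - (x + Fintype.card W)) =
      s.map fun x ↦ 2 * (Fintype.card V : ℝ) + Fintype.card W - x :=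
    Multiset.map_congr rfl fun x _ ↦ by ring
  have ht : (t.map fun x ↦ 2 * (Fintype.card V + Fintype.card W : ℝ) - (x + Fintype.card V)) =
      t.map fun x ↦ (Fintype.card V : ℝ) + 2 * Fintype.card W - x :=
    Multiset.map_congr rfl fun x _ ↦ by ring
  rw [hs, ht, two_mul (Fintype.card V + Fintype.card W : ℝ), add_sub_cancel_right,
    Multiset.insert_eq_cons, Multiset.add_cons, add_comm _ {0}, Multiset.singleton_add,
    Multiset.cons_swap]

theorem completeBipartiteGraph_eq_graphJoin (V W : Type*) :
    completeBipartiteGraph V W = graphJoin ⊥ ⊥ := by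
  ext (u | u) (v | v) <;> simp [graphJoin]

theorem starPlusEdge_eq_graphJoin (k : ℕ) : starPlusEdge k = graphJoin ⊥ (⊤ ⊕g ⊥) := by
  ext (u | (_ | _) | u) (v | (_ | _) | v) <;> simp [starPlusEdge, graphJoin]

theorem bipPlusEdge_eq_graphJoin (k : ℕ) : bipPlusEdge k = graphJoin (⊤ ⊕g ⊥) ⊥ := by
  ext (((_ | _) | u) | u) (((_ | _) | v) | v) <;> simp [bipPlusEdge, graphJoin]

theorem roots_charpoly_distLaplacian_completeBipartiteGraph [Nonempty V] [Nonempty W] :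
    (distLaplacian (completeBipartiteGraph V W)).charpoly.roots =
      Multiset.replicate (Fintype.card V - 1) (2 * (Fintype.card V : ℝ) + Fintype.card W) +
        Multiset.replicate (Fintype.card W - 1) ((Fintype.card V : ℝ) + 2 * Fintype.card W) +
          {(Fintype.card V + Fintype.card W : ℝ), 0} := by
  rw [completeBipartiteGraph_eq_graphJoin,
    roots_charpoly_distLaplacian_graphJoin roots_charpoly_lapMatrix_bot_of_nonempty
      roots_charpoly_lapMatrix_bot_of_nonempty]
  simp

theorem roots_charpoly_distLaplacian_starPlusEdge (k : ℕ) :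
    (distLaplacian (starPlusEdge k)).charpoly.roots =
      Multiset.replicate k (2 * (k : ℝ) + 5) + {2 * (k : ℝ) + 3, (k : ℝ) + 3, 0} := by
  classical
  rw [starPlusEdge_eq_graphJoin,
    roots_charpoly_distLaplacian_graphJoin roots_charpoly_lapMatrix_bot_of_nonempty
      roots_charpoly_lapMatrix_top_sum_bot]
  simp only [Fintype.card_unique, tsub_self, Multiset.replicate_zero, Nat.cast_one, mul_one,
    Fintype.card_sum, Fintype.card_bool, Fintype.card_fin, Nat.cast_add, Nat.cast_ofNat,
    Multiset.map_zero, Nat.add_one_sub_one, Multiset.replicate_succ, Multiset.cons_zero,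
    Multiset.singleton_add, Multiset.map_cons, Multiset.map_replicate, sub_zero, zero_add,
    Multiset.insert_eq_cons, Multiset.add_cons, Multiset.cons_add]
  rw [Multiset.cons_swap]
  ring_nf

theorem roots_charpoly_distLaplacian_bipPlusEdge (k : ℕ) :
    (distLaplacian (bipPlusEdge k)).charpoly.roots =
      Multiset.replicate (2 * k + 1) (3 * (k : ℝ) + 6) +
        {3 * (k : ℝ) + 4, 2 * (k : ℝ) + 4, 0} := by
  classical
  rw [bipPlusEdge_eq_graphJoin,
    roots_charpoly_distLaplacian_graphJoin roots_charpoly_lapMatrix_top_sum_bot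
      roots_charpoly_lapMatrix_bot_of_nonempty]
  simp only [Fintype.card_bool, Nat.add_one_sub_one, Nat.cast_ofNat, Multiset.replicate_succ,
    Multiset.replicate_zero, Multiset.cons_zero, Fintype.card_fin, Multiset.singleton_add,
    Fintype.card_sum, Nat.cast_add, Multiset.map_cons, Multiset.map_replicate, sub_zero,
    Multiset.add_cons, Multiset.cons_add, Multiset.insert_eq_cons, two_mul k,
    Multiset.replicate_add]
  rw [Multiset.cons_swap (2 + (k : ℝ) + 2 * (k + 2)), Multiset.cons_swap]
  ring_nf

end DistLaplacian

theorem distLaplacian_spectra_of_H1_graphs_general (n : ℕ) (hn : 3 ≤ n) :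
    (Even n → (distLaplacian (bipPlusEdge (n / 2 - 2))).charpoly.roots =
        Multiset.replicate (n - 3) (3 * (n : ℝ) / 2) +
          {3 * (n : ℝ) / 2 - 2, (n : ℝ), 0}) ∧
    (distLaplacian (completeBipartiteGraph (Fin 2) (Fin (n - 2)))).charpoly.roots =
        Multiset.replicate (n - 3) (2 * (n : ℝ) - 2) + {(n : ℝ) + 2, (n : ℝ), 0} ∧
    (distLaplacian (starPlusEdge (n - 3))).charpoly.roots =
        Multiset.replicate (n - 3) (2 * (n : ℝ) - 1) + {2 * (n : ℝ) - 3, (n : ℝ), 0} := by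
  refine ⟨fun heven ↦ ?_, ?_, ?_⟩
  · obtain ⟨k, rfl⟩ : ∃ k, n = 2 * k + 4 := ⟨n / 2 - 2, by grind⟩
    rw [show (2 * k + 4) / 2 - 2 = k by lia, roots_charpoly_distLaplacian_bipPlusEdge]
    push_cast
    ring_nf
  · obtain ⟨k, rfl⟩ := Nat.exists_eq_add_of_le' hn
    rw [show k + 3 - 2 = k + 1 by lia, roots_charpoly_distLaplacian_completeBipartiteGraph]
    simp only [Fintype.card_fin, Nat.add_one_sub_one, Nat.cast_ofNat, Nat.cast_add, Nat.cast_one,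
      Multiset.replicate_succ, Multiset.replicate_zero, Multiset.cons_zero, Nat.add_sub_cancel,
      Multiset.singleton_add, Multiset.insert_eq_cons, Multiset.add_cons, Multiset.cons_add]
    rw [Multiset.cons_swap]
    ring_nf
  · obtain ⟨k, rfl⟩ := Nat.exists_eq_add_of_le' hn
    rw [Nat.add_sub_cancel, roots_charpoly_distLaplacian_starPlusEdge]
    push_cast
    ring_nf

/-- For `n ≥ 6`: if `n` is even then the distance Laplacian spectrum of
`K_{n/2,n/2}+e` is `{(3n/2)^{n-3}, 3n/2 - 2, n, 0}`; the distance Laplacian spectrum of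
`K_{2,n-2}` is `{(2n-2)^{n-3}, n+2, n, 0}`; and the distance Laplacian spectrum of
`K_{1,n-1}+e` is `{(2n-1)^{n-3}, 2n-3, n, 0}`. -/
theorem distLaplacian_spectra_of_H1_graphs (n : ℕ) (hn : 6 ≤ n) :
    (Even n → (distLaplacian (bipPlusEdge (n / 2 - 2))).charpoly.roots =
        Multiset.replicate (n - 3) (3 * (n : ℝ) / 2) +
          {3 * (n : ℝ) / 2 - 2, (n : ℝ), 0}) ∧
    (distLaplacian (completeBipartiteGraph (Fin 2) (Fin (n - 2)))).charpoly.roots =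
        Multiset.replicate (n - 3) (2 * (n : ℝ) - 2) + {(n : ℝ) + 2, (n : ℝ), 0} ∧
    (distLaplacian (starPlusEdge (n - 3))).charpoly.roots =
        Multiset.replicate (n - 3) (2 * (n : ℝ) - 1) + {2 * (n : ℝ) - 3, (n : ℝ), 0} :=
  distLaplacian_spectra_of_H1_graphs_general n (by lia)
end
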